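/- arXiv:2012.10811 — 2 statements merged into one kernel-verified Lean document; each statement's English description precedes it below -/
import Mathlib

section
/- There exists a constant C > 0 such that for every q ∈ (0,1], every n ≥ 1, every k ≥ 0, every r ≥ 2, and every initial label configuration ρ, the frozen n-walker H–V walk satisfies p_{k,r}(ρ) ≥ 1 − (π/(2 ln r)) · ( ((2q−1)/(nq)) Σ_{x ∈ B_{r+1}} ( wt_{ζ_0}(x) − E[ wt_{ζ_{τ_{k,r}(ρ)}}(x) ] ) + k/n + C ). -/
/-!
The inequality comes from a martingale. Let `a` be the potential kernel, `X_i(t)` the position of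
the `i`-th walker, `ζ_t` the labels, and `R_t` the number of returns to the origin. Put
`c = (2q - 1)/q` and
`M_t = ∑_i (a(X_i(t)) + 1[X_i(t) = 0]) + c ∑_{x ∈ B_{r+1}} wt_{ζ_t}(x) - R_t`.
A step of a walker from `x` changes the first sum, on average, by a combination of `f_H(x)` and
`f_V(x)` depending on the label at `x`. Since `f_H + f_V` is the unit mass at the origin, i.e. `a` is
harmonic elsewhere, this change is `2(2q - 1) wt(x)` for `x ≠ 0` and is cancelled by the change
`-2q wt(x)` of the weight at `x`. At the origin both weights are `1/2` and the drift `+1` of `a`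
is cancelled by the loss of the indicator; an arrival at the origin gains the indicator and one
return (`stepE_mart`).

Optional stopping at `τ` (`integral_mart_tau`) applies because `M` is bounded up to `τ` and `τ` is
almost surely finite: the sum of the `|X_i|²` has drift one at each move of an unfrozen walker, so
the expected number of such moves is finite (`ae_frozen`). At `τ` there are at most `k` returns.
If fewer than `k` returns ever occur, every walker is frozen on `∂B_r`, where
`a ≥ (2/π) ln r`. Comparing expectations at times `0` and `τ` gives the theorem with `C = 1`, the
constant coming from `M_0`, where each walker contributes the indicator `1`
(`measure_few_returns_le`).

The kernel bound `a(x) ≥ (2/π) ln |x|` with no error term (`log_le_potKer`) is proved by hand. In the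
rotated coordinates `x₁ ± x₂` the walk is a pair of independent one-dimensional walks (`srw_eq`).
The increments of `a` along the diagonal are sums with an exact antidifference (`sum_cc_diff`),
which Wallis' product evaluates as `a(n,n) = (4/π) ∑_{j < n} 1/(2j + 1) ≥ (2/π) ln (2n + 1)`. At
other points with even coordinate sum `a` is bounded below by the value at a diagonal point,
and at points with odd coordinate sum harmonicity gives the same bound. Convergence of the series
defining `a` is obtained along the way.

Expectations are handled through functions that depend on finitely many positions (`DepOn`),
together with an explicit one-step conditional expectation (`stepE`, `integral_step`).
-/

open MeasureTheory Filter
open scoped ENNReal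

namespace HV

abbrev Z2 := ℤ × ℤ

/-- A label configuration: `true` stands for label `H`, `false` for label `V`. -/
abbrev Config := Z2 → Bool

/-- The state of the walk: positions of the `n` walkers and the label configuration. -/
abbrev State (n : ℕ) := (Fin n → Z2) × Config

/-- A trajectory: the sequence of positions of the active walker after each step. -/
abbrev Path := ℕ → Z2

/-- The walker that is active at the `(t+1)`-st step of the cyclic turn order. -/
def active (n : ℕ) (hn : 0 < n) (t : ℕ) : Fin n := ⟨t % n, Nat.mod_lt t hn⟩

/-- Update the state when walker `i` moves to `y`: the label of the vertex the walker
leaves becomes `H` (`true`) if the move was horizontal, `V` (`false`) if vertical. -/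
def apply' (n : ℕ) (s : State n) (i : Fin n) (y : Z2) : State n :=
  (Function.update s.1 i y,
    Function.update s.2 (s.1 i) (if y.2 = (s.1 i).2 then true else false))

/-- The one-step transition probability of the `H`–`V` walk with parameter `q`:
probability that, from state `s`, the active walker `i` moves to `y`.  The label of the
current location is first resampled (flipped with probability `q`), and then the walker
takes a uniform horizontal step if the new label is `H`, a uniform vertical step if the
new label is `V`. -/
noncomputable def weight (q : ℝ) (n : ℕ) (s : State n) (i : Fin n) (y : Z2) : ℝ≥0∞ :=
  if y = s.1 i + (1, 0) ∨ y = s.1 i - (1, 0) then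
    ENNReal.ofReal ((if s.2 (s.1 i) then 1 - q else q) / 2)
  else if y = s.1 i + (0, 1) ∨ y = s.1 i - (0, 1) then
    ENNReal.ofReal ((if s.2 (s.1 i) then q else 1 - q) / 2)
  else 0

/-- The deterministic reconstruction of the state of the `n`-walker `H`–`V` walk
(with all walkers starting at the origin and initial labels `ρ`) from a trajectory. -/
def seq (n : ℕ) (hn : 0 < n) (ρ : Config) (y : Path) : ℕ → State n
  | 0 => (fun _ => (0, 0), ρ)
  | t + 1 => apply' n (seq n hn ρ y t) (active n hn t) (y t)

/-- `μ` is the law of the `n`-walker `H`–`V` walk with parameter `q` and initial labels `ρ`: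
the finite-dimensional distributions are products of one-step transition probabilities. -/
def IsLaw (q : ℝ) (n : ℕ) (hn : 0 < n) (ρ : Config) (μ : Measure Path) : Prop :=
  ∀ (t : ℕ) (c : Path),
    μ {y : Path | ∀ s < t, y s = c s} =
      ∏ s ∈ Finset.range t, weight q n (seq n hn ρ c s) (active n hn s) (c s)

/-- A trajectory is recurrent if every vertex is visited infinitely many times. -/
def Recurrent (n : ℕ) (hn : 0 < n) (ρ : Config) (y : Path) : Prop :=
  ∀ v : Z2, {t : ℕ | ∃ i, (seq n hn ρ y t).1 i = v}.Infinite

end HV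

namespace HV

/-- The Euclidean norm of a lattice point. -/
noncomputable def norm2 (x : Z2) : ℝ := Real.sqrt ((x.1 : ℝ) ^ 2 + (x.2 : ℝ) ^ 2)

/-- The open Euclidean ball `B_r` of radius `r` around the origin in `ℤ²`. -/
def ball (r : ℝ) : Set Z2 := {x | norm2 x < r}

/-- `x` and `y` are nearest neighbors in `ℤ²`. -/
def adj (x y : Z2) : Prop := |x.1 - y.1| + |x.2 - y.2| = 1

/-- The outer boundary `∂B_r` of the ball `B_r`. -/
def bdry (r : ℝ) : Set Z2 := {x | x ∉ ball r ∧ ∃ y, adj x y ∧ y ∈ ball r}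

open Classical in
/-- Update of the state of the frozen walk: a walker located on `∂B_r` is frozen and
skips its turn. -/
noncomputable def fapply (n : ℕ) (r : ℝ) (s : State n) (i : Fin n) (y : Z2) : State n :=
  if s.1 i ∈ bdry r then s else apply' n s i y

open Classical in
/-- The one-step transition probability of the frozen `H`–`V` walk: a walker located on
`∂B_r` stays put with probability one. -/
noncomputable def fweight (q : ℝ) (n : ℕ) (r : ℝ) (s : State n) (i : Fin n) (y : Z2) :
    ℝ≥0∞ :=
  if s.1 i ∈ bdry r then (if y = s.1 i then 1 else 0) else weight q n s i y

/-- The deterministic reconstruction of the state of the frozen `n`-walker `H`–`V` walk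
in `B_r` (with all walkers starting at the origin and initial labels `ρ`) from a
trajectory. -/
noncomputable def fseq (n : ℕ) (hn : 0 < n) (r : ℝ) (ρ : Config) (y : Path) :
    ℕ → State n
  | 0 => (fun _ => (0, 0), ρ)
  | t + 1 => fapply n r (fseq n hn r ρ y t) (active n hn t) (y t)

/-- `μ` is the law of the frozen `n`-walker `H`–`V` walk in `B_r` with parameter `q` and
initial labels `ρ`. -/
def IsFrozenLaw (q : ℝ) (n : ℕ) (hn : 0 < n) (r : ℝ) (ρ : Config) (μ : Measure Path) :
    Prop :=
  ∀ (t : ℕ) (c : Path),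
    μ {y : Path | ∀ s < t, y s = c s} =
      ∏ s ∈ Finset.range t, fweight q n r (fseq n hn r ρ c s) (active n hn s) (c s)

open Classical in
/-- `R_{t,r}`: the number of returns to the origin up to time `t` of a walk with state
sequence `S`. -/
noncomputable def returns (n : ℕ) (S : ℕ → State n) (t : ℕ) : ℕ :=
  ((Finset.Icc 1 t).filter fun s =>
    ∃ i, (S (s - 1)).1 i ≠ (0, 0) ∧ (S s).1 i = (0, 0)).card

open Classical in
/-- `N_t`: the number of departures from the origin up to time `t` of a walk with state
sequence `S`. -/
noncomputable def departures (n : ℕ) (S : ℕ → State n) (t : ℕ) : ℕ :=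
  ((Finset.Icc 1 t).filter fun s =>
    ∃ i, (S (s - 1)).1 i = (0, 0) ∧ (S s).1 i ≠ (0, 0)).card

/-- The return probability `p_{k,r}(ρ) = lim_{t→∞} P[R_{t,r} ≥ k]` of the frozen walk
with law `μr`. -/
noncomputable def returnProb (n : ℕ) (hn : 0 < n) (r : ℝ) (ρ : Config)
    (μr : Measure Path) (k : ℕ) : ℝ :=
  limUnder atTop fun t =>
    (μr {y : Path | k ≤ returns n (fun u => fseq n hn r ρ y u) t}).toReal

open Classical in
/-- The stopping time `τ_{k,r}(ρ)`: the first time at which the frozen walk has either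
returned to the origin `k` times or all walkers are frozen at `∂B_r`. -/
noncomputable def tau (n : ℕ) (hn : 0 < n) (r : ℝ) (ρ : Config) (k : ℕ) (y : Path) :
    ℕ :=
  sInf {t : ℕ | returns n (fun u => fseq n hn r ρ y u) t = k ∨
    ∀ i, (fseq n hn r ρ y t).1 i ∈ bdry r}

end HV

namespace HV

/-- `srw i x`: the probability that the simple random walk on `ℤ²` started at the
origin is at `x` after `i` steps. -/
noncomputable def srw : ℕ → Z2 → ℝ
  | 0, x => if x = (0, 0) then 1 else 0
  | i + 1, x =>
    (srw i (x + (1, 0)) + srw i (x - (1, 0)) + srw i (x + (0, 1)) + srw i (x - (0, 1))) / 4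

/-- The potential kernel `a` of the simple random walk on `ℤ²`:
`a(x) = lim_{m→∞} Σ_{i<m} (p_i(0,0) − p_i(x))`. -/
noncomputable def potKer (x : Z2) : ℝ :=
  limUnder atTop fun m : ℕ => ∑ i ∈ Finset.range m, (srw i (0, 0) - srw i x)

/-- `f_H(x) = (a(x+(0,1)) + a(x−(0,1)) − 2a(x))/4`. -/
noncomputable def fH (x : Z2) : ℝ :=
  (potKer (x + (0, 1)) + potKer (x - (0, 1)) - 2 * potKer x) / 4

/-- `f_V(x) = (a(x+(1,0)) + a(x−(1,0)) − 2a(x))/4`. -/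
noncomputable def fV (x : Z2) : ℝ :=
  (potKer (x + (1, 0)) + potKer (x - (1, 0)) - 2 * potKer x) / 4

/-- The weight `wt_ζ(x)` of the vertex `x` under the label configuration `ζ`. -/
noncomputable def wt (ζ : Config) (x : Z2) : ℝ := if ζ x then fH x else fV x

/-- `f(x) = max(|f_H(x)|, |f_V(x)|)`. -/
noncomputable def fMax (x : Z2) : ℝ := max |fH x| |fV x|

/-- The argument of a nonzero lattice point: the unique `θ ∈ (−π, π]` with
`x/|x| = (cos θ, sin θ)`. -/
noncomputable def argZ (x : Z2) : ℝ := Complex.arg ((x.1 : ℂ) + (x.2 : ℂ) * Complex.I)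

open Classical in
/-- The set of lattice points in the open Euclidean ball of radius `R`, as a finite
set. -/
noncomputable def ballFinset (R : ℝ) : Finset Z2 :=
  (Finset.Icc (-⌈R⌉, -⌈R⌉) (⌈R⌉, ⌈R⌉)).filter fun x => norm2 x < R

end HV

/-! ### The potential kernel of simple random walk -/

namespace HV

/-- `bw i u`: the probability that the simple random walk on `ℤ` is at `u` after `i` steps. -/
noncomputable def bw : ℕ → ℤ → ℝ
  | 0, u => if u = 0 then 1 else 0
  | i + 1, u => (bw i (u - 1) + bw i (u + 1)) / 2

/-- In the coordinates `x₁ + x₂`, `x₁ - x₂` the planar walk is a pair of independent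
one-dimensional walks. -/
lemma srw_eq (i : ℕ) (x : Z2) : srw i x = bw i (x.1 + x.2) * bw i (x.1 - x.2) := by
  induction i generalizing x with
  | zero =>
    obtain ⟨a, b⟩ := x
    simp only [srw, bw, Prod.mk.injEq]
    split_ifs <;> first | (exfalso; omega) | norm_num
  | succ i ih =>
    obtain ⟨a, b⟩ := x
    simp only [srw, bw, ih, Prod.mk_add_mk, Prod.mk_sub_mk]
    have e1 : a + 1 + (b + 0) = a + b + 1 := by ring
    have e2 : a + 1 - (b + 0) = a - b + 1 := by ring
    have e3 : a - 1 + (b - 0) = a + b - 1 := by ring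
    have e4 : a - 1 - (b - 0) = a - b - 1 := by ring
    have e5 : a + 0 + (b + 1) = a + b + 1 := by ring
    have e6 : a + 0 - (b + 1) = a - b - 1 := by ring
    have e7 : a - 0 + (b - 1) = a + b - 1 := by ring
    have e8 : a - 0 - (b - 1) = a - b + 1 := by ring
    rw [e1, e2, e3, e4, e5, e6, e7, e8]
    ring

lemma bw_nonneg (i : ℕ) (u : ℤ) : 0 ≤ bw i u := by
  induction i generalizing u with
  | zero => simp only [bw]; split_ifs <;> norm_num
  | succ i ih => simp only [bw]; have := ih (u - 1); have := ih (u + 1); positivity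

lemma bw_neg (i : ℕ) (u : ℤ) : bw i (-u) = bw i u := by
  induction i generalizing u with
  | zero => simp [bw]
  | succ i ih =>
    simp only [bw]
    rw [show -u - 1 = -(u + 1) by ring, show -u + 1 = -(u - 1) by ring, ih, ih, add_comm]

lemma bw_eq_zero_of_lt (i : ℕ) (u : ℤ) (h : u < -i) : bw i u = 0 := by
  induction i generalizing u with
  | zero => simp only [bw]; rw [if_neg]; push_cast at h; omega
  | succ i ih =>
    simp only [bw]
    push_cast at h
    rw [ih _ (by omega), ih _ (by omega)]; simp

lemma bw_parity (i : ℕ) (u : ℤ) (h : (i + u) % 2 = 1) : bw i u = 0 := by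
  induction i generalizing u with
  | zero => simp only [bw]; rw [if_neg]; push_cast at h; omega
  | succ i ih =>
    simp only [bw]
    push_cast at h
    rw [ih _ (by omega), ih _ (by omega)]; simp

lemma bw_choose (i k : ℕ) : bw i (2 * k - i) = (i.choose k : ℝ) / 2 ^ i := by
  induction i generalizing k with
  | zero =>
    simp only [bw]
    rcases k with _ | k
    · simp
    · rw [if_neg (by push_cast; omega)]; simp
  | succ i ih =>
    simp only [bw]
    rcases k with _ | k
    · have h1 := bw_eq_zero_of_lt i (2 * ((0 : ℕ) : ℤ) - ((i + 1 : ℕ) : ℤ) - 1)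
        (by push_cast; omega)
      have h2 := ih 0
      rw [h1, show (2 * ((0 : ℕ) : ℤ) - ((i + 1 : ℕ) : ℤ) + 1) = 2 * ((0 : ℕ) : ℤ) - i by
        push_cast; ring, h2]
      simp [pow_succ]; ring
    · rw [show (2 * ((k + 1 : ℕ) : ℤ) - ((i + 1 : ℕ) : ℤ) - 1) = 2 * (k : ℤ) - i by
        push_cast; ring,
        show (2 * ((k + 1 : ℕ) : ℤ) - ((i + 1 : ℕ) : ℤ) + 1) = 2 * ((k + 1 : ℕ) : ℤ) - i by
        push_cast; ring, ih, ih, Nat.choose_succ_succ]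
      push_cast
      rw [pow_succ]; field_simp

/-- `cc m j`: the probability that the one-dimensional walk is at `2 * j` after `2 * m` steps. -/
noncomputable def cc (m j : ℕ) : ℝ := ((2 * m).choose (m + j) : ℝ) / 4 ^ m

lemma bw_even (m j : ℕ) : bw (2 * m) (2 * j) = cc m j := by
  have := bw_choose (2 * m) (m + j)
  rw [show (2 * ((m + j : ℕ) : ℤ) - ((2 * m : ℕ) : ℤ)) = 2 * j by push_cast; ring] at this
  rw [this, cc, pow_mul]; norm_num

lemma bw_even' (m : ℕ) (j : ℤ) : bw (2 * m) (2 * j) = cc m j.natAbs := by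
  rw [← bw_even]
  rcases Int.natAbs_eq j with h | h
  · rw [← h]
  · rw [← bw_neg]; congr 1; omega

lemma cc_nonneg (m j : ℕ) : 0 ≤ cc m j := by unfold cc; positivity

lemma cc_succ_right (m n : ℕ) : cc m (n + 1) * (m + n + 1) = cc m n * (m - n) := by
  have h := Nat.choose_succ_right_eq (2 * m) (m + n)
  unfold cc
  rw [← add_assoc, div_mul_eq_mul_div, div_mul_eq_mul_div]
  congr 1
  rcases le_or_gt n m with hn | hn
  · rw [show 2 * m - (m + n) = m - n by omega] at h
    have := congrArg (fun t : ℕ => (t : ℝ)) h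
    push_cast [Nat.cast_sub hn] at this
    exact this
  · rw [Nat.choose_eq_zero_of_lt (by omega), Nat.choose_eq_zero_of_lt (by omega)]; simp

lemma cc_succ_left (m n : ℕ) :
    cc (m + 1) n * ((m + 1 + n) * (m + 1 - n)) = cc m n * ((2 * m + 2) * (2 * m + 1) / 4) := by
  have h1 := Nat.add_one_mul_choose_eq (2 * m + 1) (m + n)
  have h2 := Nat.choose_mul_succ_eq (2 * m) (m + n)
  unfold cc
  rw [show 2 * (m + 1) = 2 * m + 1 + 1 by ring, show m + 1 + n = m + n + 1 by ring]
  rcases le_or_gt n (m + 1) with hn | hn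
  · rw [show 2 * m + 1 - (m + n) = m + 1 - n by omega] at h2
    have h1' := congrArg (fun t : ℕ => (t : ℝ)) h1
    have h2' := congrArg (fun t : ℕ => (t : ℝ)) h2
    push_cast [Nat.cast_sub hn] at h1' h2'
    rw [pow_succ]
    field_simp
    linear_combination (-(m + 1 - n : ℝ)) * h1' - (2 * (m : ℝ) + 1 + 1) * h2'
  · rw [Nat.choose_eq_zero_of_lt (by omega), Nat.choose_eq_zero_of_lt (by omega)]; simp

lemma cc_anti (m n : ℕ) : cc m (n + 1) ≤ cc m n := by
  have h := cc_succ_right m n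
  have h0 := cc_nonneg m n
  have h3 : (0 : ℝ) < m + n + 1 := by positivity
  have : cc m (n + 1) * (m + n + 1) ≤ cc m n * (m + n + 1) := by
    rw [h]; apply mul_le_mul_of_nonneg_left _ h0
    have : (0 : ℝ) ≤ n := by positivity
    linarith
  exact le_of_mul_le_mul_right this h3

lemma cc_le (m n : ℕ) : cc m n ≤ cc m 0 :=
  antitone_nat_of_succ_le (cc_anti m) (Nat.zero_le n)

/-- The sum over `m` of the increment `p_{2m}(n,n) - p_{2m}(n+1,n+1)` telescopes exactly
(the certificate is of Gosper's type). -/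
lemma sum_cc_diff (n M : ℕ) :
    ∑ m ∈ Finset.range M, cc m 0 * (cc m n - cc m (n + 1)) =
      4 / (2 * n + 1) * ((M - n) * (cc M 0 * cc M n)) := by
  induction M with
  | zero =>
    rcases n with _ | n
    · simp
    · simp [cc]
  | succ M ih =>
    rw [Finset.sum_range_succ, ih]
    have h0 := cc_succ_left M 0
    have h1 := cc_succ_left M n
    have h2 := cc_succ_right M n
    have p1 : (M + n + 1 : ℝ) ≠ 0 := by positivity
    have p2 : (M + 1 : ℝ) ≠ 0 := by positivity
    have p3 : (2 * n + 1 : ℝ) ≠ 0 := by positivity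
    have e0 : cc (M + 1) 0 = cc M 0 * (2 * M + 1) / (2 * (M + 1)) := by
      rw [eq_div_iff (by positivity)]
      push_cast at h0
      have : (cc (M + 1) 0 * (2 * (M + 1))) * (M + 1) = (cc M 0 * (2 * M + 1)) * (M + 1) := by
        linear_combination 2 * h0
      exact mul_right_cancel₀ p2 this
    have e1 : ((M + 1 : ℕ) - n : ℝ) * cc (M + 1) n
        = cc M n * ((2 * M + 2) * (2 * M + 1) / 4) / (M + n + 1) := by
      rw [eq_div_iff p1, ← h1]; push_cast; ring
    have e2 : cc M (n + 1) = cc M n * (M - n) / (M + n + 1) := by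
      rw [eq_div_iff p1, ← h2]
    rw [show ((M + 1 : ℕ) - n : ℝ) * (cc (M + 1) 0 * cc (M + 1) n) =
      cc (M + 1) 0 * (((M + 1 : ℕ) - n : ℝ) * cc (M + 1) n) by ring, e1, e0, e2]
    field_simp
    ring

open Topology in
/-- Wallis' product, as the local limit theorem `M * P(S_{2M} = 0)² → 1/π`. -/
lemma tendsto_cc_zero :
    Tendsto (fun M : ℕ => (M : ℝ) * (cc M 0 * cc M 0)) atTop (𝓝 (1 / Real.pi)) := by
  have hW := Real.Wallis.tendsto_W_nhds_pi_div_two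
  have hpi := Real.pi_pos
  have h1 : ∀ M : ℕ, (M : ℝ) * (cc M 0 * cc M 0) =
      (1 - 1 / (2 * (M : ℝ) + 1)) / 2 * (Real.Wallis.W M)⁻¹ := by
    intro M
    have hf : ((M.factorial : ℕ) : ℝ) ≠ 0 := by positivity
    have hf2 : (((2 * M).factorial : ℕ) : ℝ) ≠ 0 := by positivity
    have hc : ((2 * M).choose M : ℝ) = (2 * M).factorial / (M.factorial * M.factorial) := by
      rw [Nat.cast_choose ℝ (by omega : M ≤ 2 * M), show 2 * M - M = M by omega]
    rw [Real.Wallis.W_eq_factorial_ratio, cc, add_zero, hc, pow_mul,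
      show ((2 : ℝ) ^ 4) ^ M = 4 ^ M * 4 ^ M by rw [← mul_pow]; norm_num]
    field_simp
    ring
  have h2 : Tendsto (fun M : ℕ => 1 / (2 * (M : ℝ) + 1)) atTop (𝓝 0) := by
    have : Tendsto (fun M : ℕ => (2 * (M : ℝ) + 1)) atTop atTop :=
      tendsto_atTop_add_const_right _ _
        (tendsto_natCast_atTop_atTop.const_mul_atTop (by norm_num : (0 : ℝ) < 2))
    exact this.inv_tendsto_atTop.congr fun M => by simp
  have h3 := ((h2.const_sub 1).div_const 2).mul (hW.inv₀ (by positivity))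
  simp_rw [h1]
  convert h3 using 2
  field_simp
  norm_num

open Topology in
/-- Successive ratios `cc M (n + 1) / cc M n` tend to `1`, so the limit is the same for all
`n`. -/
lemma tendsto_cc (n : ℕ) :
    Tendsto (fun M : ℕ => (M : ℝ) * (cc M 0 * cc M n)) atTop (𝓝 (1 / Real.pi)) := by
  induction n with
  | zero => exact tendsto_cc_zero
  | succ n ih =>
    have h2 : Tendsto (fun M : ℕ => (2 * n + 1 : ℝ) * ((M : ℝ) + (n + 1))⁻¹) atTop (𝓝 0) := by
      have : Tendsto (fun M : ℕ => ((M : ℝ) + (n + 1))) atTop atTop :=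
        tendsto_atTop_add_const_right _ _ tendsto_natCast_atTop_atTop
      simpa using this.inv_tendsto_atTop.const_mul (2 * n + 1 : ℝ)
    have h3 := ih.mul (h2.const_sub 1)
    simp only [sub_zero, mul_one] at h3
    refine h3.congr fun M => ?_
    have p1 : (M + n + 1 : ℝ) ≠ 0 := by positivity
    have e2 : cc M (n + 1) = cc M n * (M - n) / (M + n + 1) := by
      rw [eq_div_iff p1, ← cc_succ_right M n]
    rw [e2, ← add_assoc]
    field_simp
    ring

open Topology in
lemma tendsto_cc_mul (n : ℕ) :
    Tendsto (fun M : ℕ => cc M 0 * cc M n) atTop (𝓝 0) := by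
  have h := (tendsto_cc n).mul (tendsto_inv_atTop_nhds_zero_nat (𝕜 := ℝ))
  rw [mul_zero] at h
  refine h.congr' ?_
  filter_upwards [eventually_gt_atTop 0] with M hM
  have : (M : ℝ) ≠ 0 := by positivity
  field_simp

lemma hasSum_cc_diff (n : ℕ) :
    HasSum (fun m => cc m 0 * (cc m n - cc m (n + 1))) (4 / (Real.pi * (2 * n + 1))) := by
  rw [hasSum_iff_tendsto_nat_of_nonneg]
  · simp_rw [sum_cc_diff]
    have h := ((tendsto_cc n).sub ((tendsto_cc_mul n).const_mul (n : ℝ))).const_mul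
      (4 / (2 * n + 1) : ℝ)
    convert h using 2
    · ring
    · have := Real.pi_pos
      field_simp
      ring
  · intro m
    exact mul_nonneg (cc_nonneg _ _) (sub_nonneg.2 (cc_anti _ _))

/-- The value of the potential kernel at the diagonal point `(n, n)`. -/
noncomputable def diagVal (n : ℕ) : ℝ :=
  ∑ j ∈ Finset.range n, 4 / (Real.pi * (2 * j + 1))

lemma hasSum_diag (n : ℕ) :
    HasSum (fun m => cc m 0 * (cc m 0 - cc m n)) (diagVal n) := by
  induction n with
  | zero => simp [diagVal]
  | succ n ih =>
    have := ih.add (hasSum_cc_diff n)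
    rw [diagVal, Finset.sum_range_succ]
    convert this using 2
    · ring
    · rfl

/-- The terms of `diagVal` dominate the increments of `(2/π) log (2n + 1)`, by
`log x ≤ x - 1`. -/
lemma log_le_diagVal (n : ℕ) : 2 / Real.pi * Real.log (2 * n + 1) ≤ diagVal n := by
  have hpi := Real.pi_pos
  induction n with
  | zero => simp [diagVal]
  | succ n ih =>
    rw [diagVal, Finset.sum_range_succ]
    have h1 := Real.log_le_sub_one_of_pos (x := (2 * (n : ℝ) + 3) / (2 * n + 1)) (by positivity)
    rw [Real.log_div (by positivity) (by positivity)] at h1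
    have h2 : (2 * (n : ℝ) + 3) / (2 * n + 1) - 1 = 2 / (2 * n + 1) := by
      field_simp; ring
    have h3 : 4 / (Real.pi * (2 * n + 1)) = 2 / Real.pi * (2 / (2 * n + 1)) := by
      field_simp; norm_num
    rw [h3]
    push_cast
    rw [show 2 * ((n : ℝ) + 1) + 1 = 2 * n + 3 by ring]
    have h4 : 2 / Real.pi * (Real.log (2 * n + 3) - Real.log (2 * n + 1))
        ≤ 2 / Real.pi * (2 / (2 * n + 1)) := by
      apply mul_le_mul_of_nonneg_left _ (by positivity)
      linarith
    have := ih
    rw [diagVal] at this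
    linarith

/-- At a point with even coordinate sum the series of the potential kernel converges, and it
dominates the value at a diagonal point. -/
lemma even_kernel (x : Z2) (j l : ℤ) (hj : x.1 + x.2 = 2 * j) (hl : x.1 - x.2 = 2 * l) :
    ∃ A : ℝ, HasSum (fun i => srw i (0, 0) - srw i x) A ∧
      diagVal (max j.natAbs l.natAbs) ≤ A := by
  have hodd : ∀ k : ℕ, srw (2 * k + 1) (0, 0) - srw (2 * k + 1) x = 0 := by
    intro k
    rw [srw_eq, srw_eq, hj, bw_parity _ (0 + 0) (by push_cast; omega),
      bw_parity _ (2 * j) (by push_cast; omega)]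
    simp
  have hev : ∀ m : ℕ, srw (2 * m) (0, 0) - srw (2 * m) x =
      cc m 0 * cc m 0 - cc m j.natAbs * cc m l.natAbs := by
    intro m
    rw [srw_eq, srw_eq, hj, hl, bw_even', bw_even']
    have := bw_even' m 0
    simp only [mul_zero, Int.natAbs_zero] at this
    simp [this]
  have hlow : ∀ m : ℕ, cc m 0 * (cc m 0 - cc m (max j.natAbs l.natAbs)) ≤
      cc m 0 * cc m 0 - cc m j.natAbs * cc m l.natAbs := by
    intro m
    have h0 := cc_nonneg m 0
    have hj1 := cc_le m j.natAbs
    have hl1 := cc_le m l.natAbs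
    have hj0 := cc_nonneg m j.natAbs
    have hl0 := cc_nonneg m l.natAbs
    rcases le_total j.natAbs l.natAbs with h | h
    · rw [max_eq_right h]; nlinarith
    · rw [max_eq_left h]; nlinarith
  -- `a² - bc ≤ a (a - b) + a (a - c)` is the same as `0 ≤ (a - b) (a - c)`.
  have hup : ∀ m : ℕ, cc m 0 * cc m 0 - cc m j.natAbs * cc m l.natAbs ≤
      cc m 0 * (cc m 0 - cc m j.natAbs) + cc m 0 * (cc m 0 - cc m l.natAbs) := by
    intro m
    have hj1 := cc_le m j.natAbs
    have hl1 := cc_le m l.natAbs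
    nlinarith [mul_nonneg (sub_nonneg.2 hj1) (sub_nonneg.2 hl1)]
  have hs : Summable fun m => cc m 0 * cc m 0 - cc m j.natAbs * cc m l.natAbs := by
    refine Summable.of_nonneg_of_le (fun m => ?_) hup
      ((hasSum_diag j.natAbs).add (hasSum_diag l.natAbs)).summable
    refine le_trans ?_ (hlow m)
    exact mul_nonneg (cc_nonneg _ _) (sub_nonneg.2 (cc_le _ _))
  refine ⟨∑' m, (cc m 0 * cc m 0 - cc m j.natAbs * cc m l.natAbs), ?_, ?_⟩
  · have h1 : HasSum (fun k => srw (2 * k) (0, 0) - srw (2 * k) x)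
        (∑' m, (cc m 0 * cc m 0 - cc m j.natAbs * cc m l.natAbs)) := by
      simp_rw [hev]; exact hs.hasSum
    have h2 : HasSum (fun k => srw (2 * k + 1) (0, 0) - srw (2 * k + 1) x) 0 := by
      simp_rw [hodd]; exact hasSum_zero
    simpa using HasSum.even_add_odd (f := fun i => srw i (0, 0) - srw i x) h1 h2
  · exact hasSum_le hlow (hasSum_diag _) hs.hasSum

open Topology in
lemma tendsto_srw_zero : Tendsto (fun i => srw i (0, 0)) atTop (𝓝 0) := by
  have he : ∀ m : ℕ, srw (2 * m) (0, 0) = cc m 0 * cc m 0 := by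
    intro m
    have := bw_even' m 0
    simp only [mul_zero, Int.natAbs_zero] at this
    rw [srw_eq]; simp [this]
  have ho : ∀ m : ℕ, srw (2 * m + 1) (0, 0) = 0 := by
    intro m
    rw [srw_eq, bw_parity _ _ (by push_cast; omega)]; simp
  have h := tendsto_cc_mul 0
  rw [Metric.tendsto_atTop] at h ⊢
  intro ε hε
  obtain ⟨N, hN⟩ := h ε hε
  refine ⟨2 * N, fun i hi => ?_⟩
  rcases Nat.even_or_odd' i with ⟨m, rfl | rfl⟩
  · rw [he]; exact hN m (by omega)
  · rw [ho]; simpa using hε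

/-- The partial sums defining the potential kernel. -/
noncomputable def kerSum (m : ℕ) (x : Z2) : ℝ :=
  ∑ i ∈ Finset.range m, (srw i (0, 0) - srw i x)

/-- The partial sums satisfy a discrete Poisson equation up to the vanishing term
`srw m (0, 0)`. -/
lemma kerSum_succ (m : ℕ) (x : Z2) :
    kerSum (m + 1) x = (kerSum m (x + (1, 0)) + kerSum m (x - (1, 0)) + kerSum m (x + (0, 1)) +
      kerSum m (x - (0, 1))) / 4 + srw m (0, 0) - (if x = (0, 0) then 1 else 0) := by
  induction m with
  | zero => simp [kerSum, srw]
  | succ m ih =>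
    rw [kerSum, Finset.sum_range_succ, ← kerSum, ih]
    have e : ∀ y, kerSum (m + 1) y = kerSum m y + (srw m (0, 0) - srw m y) := fun y => by
      rw [kerSum, Finset.sum_range_succ, ← kerSum]
    rw [e, e, e, e]
    rw [show srw (m + 1) x = (srw m (x + (1, 0)) + srw m (x - (1, 0)) + srw m (x + (0, 1)) +
      srw m (x - (0, 1))) / 4 from rfl]
    ring

open Topology in
/-- The limit defining the potential kernel exists. At even points this is `even_kernel`; the
four neighbors of an odd point are even, so the recursion `kerSum_succ` gives convergence there. -/
lemma tendsto_kerSum (x : Z2) : Tendsto (fun m => kerSum m x) atTop (𝓝 (potKer x)) := by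
  suffices h : ∃ A, Tendsto (fun m => kerSum m x) atTop (𝓝 A) by
    exact tendsto_nhds_limUnder h
  have hev : ∀ y : Z2, (y.1 + y.2) % 2 = 0 → ∃ A, Tendsto (fun m => kerSum m y) atTop (𝓝 A) := by
    intro y hy
    obtain ⟨A, hA, -⟩ := even_kernel y ((y.1 + y.2) / 2) ((y.1 - y.2) / 2) (by omega) (by omega)
    exact ⟨A, hA.tendsto_sum_nat⟩
  by_cases hx : (x.1 + x.2) % 2 = 0
  · exact hev x hx
  · obtain ⟨a, b⟩ := x
    simp only at hx
    obtain ⟨A1, h1⟩ := hev ((a, b) + (1, 0)) (by simp; omega)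
    obtain ⟨A2, h2⟩ := hev ((a, b) - (1, 0)) (by simp; omega)
    obtain ⟨A3, h3⟩ := hev ((a, b) + (0, 1)) (by simp; omega)
    obtain ⟨A4, h4⟩ := hev ((a, b) - (0, 1)) (by simp; omega)
    have h := (((((h1.add h2).add h3).add h4).div_const 4).add tendsto_srw_zero).sub_const
      (if ((a, b) : Z2) = (0, 0) then (1 : ℝ) else 0)
    refine ⟨_, (tendsto_add_atTop_iff_nat 1).1 (h.congr fun m => ?_)⟩
    rw [kerSum_succ]

/-- The discrete Laplacian of the potential kernel is the unit mass at the origin. -/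
lemma potKer_laplace (x : Z2) :
    (potKer (x + (1, 0)) + potKer (x - (1, 0)) + potKer (x + (0, 1)) + potKer (x - (0, 1))) / 4 =
      potKer x + (if x = (0, 0) then 1 else 0) := by
  have h := (((((tendsto_kerSum (x + (1, 0))).add (tendsto_kerSum (x - (1, 0)))).add
    (tendsto_kerSum (x + (0, 1)))).add (tendsto_kerSum (x - (0, 1)))).div_const 4).add
    tendsto_srw_zero |>.sub_const (if x = (0, 0) then (1 : ℝ) else 0)
  have h2 := (tendsto_add_atTop_iff_nat 1).2 (tendsto_kerSum x)
  simp_rw [kerSum_succ] at h2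
  have := tendsto_nhds_unique h h2
  linarith

lemma potKer_zero : potKer (0, 0) = 0 :=
  tendsto_nhds_unique (tendsto_kerSum (0, 0)) (by simp [kerSum])

lemma potKer_swap (a b : ℤ) : potKer (a, b) = potKer (b, a) := by
  have : ∀ m, kerSum m (a, b) = kerSum m (b, a) := by
    intro m
    unfold kerSum
    refine Finset.sum_congr rfl fun i _ => ?_
    rw [srw_eq i (a, b), srw_eq i (b, a)]
    simp only
    rw [add_comm b a, show b - a = -(a - b) by ring, bw_neg]
  exact tendsto_nhds_unique (tendsto_kerSum (a, b)) (by simp_rw [this]; exact tendsto_kerSum _)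

lemma diagVal_mono {m n : ℕ} (h : m ≤ n) : diagVal m ≤ diagVal n := by
  have := Real.pi_pos
  exact Finset.sum_le_sum_of_subset_of_nonneg (Finset.range_mono h) fun _ _ _ => by positivity

lemma diagVal_nonneg (n : ℕ) : 0 ≤ diagVal n := by
  simpa [diagVal] using diagVal_mono (Nat.zero_le n)

/-- Comparison with a diagonal value, at every lattice point. -/
lemma diagVal_le_potKer (x : Z2) (n : ℕ)
    (h : 2 * n ≤ max (x.1 + x.2).natAbs (x.1 - x.2).natAbs) : diagVal n ≤ potKer x := by
  have hev : ∀ (y : Z2) (n : ℕ), (y.1 + y.2) % 2 = 0 →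
      2 * n ≤ max (y.1 + y.2).natAbs (y.1 - y.2).natAbs → diagVal n ≤ potKer y := by
    intro y n hy hn
    obtain ⟨A, hA, hle⟩ := even_kernel y ((y.1 + y.2) / 2) ((y.1 - y.2) / 2)
      (by omega) (by omega)
    rw [tendsto_nhds_unique (tendsto_kerSum y) hA.tendsto_sum_nat]
    refine le_trans (diagVal_mono ?_) hle
    omega
  -- An odd point is not the origin, so there the kernel is the mean of its four (even)
  -- neighbors, each of which satisfies the same bound.
  by_cases hx : (x.1 + x.2) % 2 = 0
  · exact hev x n hx h
  · have hl := potKer_laplace x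
    obtain ⟨a, b⟩ := x
    simp only at hx h
    rw [if_neg (by rintro h0; rw [Prod.mk.injEq] at h0; omega), add_zero] at hl
    have h1 := hev ((a, b) + (1, 0)) n (by simp; omega) (by simp; omega)
    have h2 := hev ((a, b) - (1, 0)) n (by simp; omega) (by simp; omega)
    have h3 := hev ((a, b) + (0, 1)) n (by simp; omega) (by simp; omega)
    have h4 := hev ((a, b) - (0, 1)) n (by simp; omega) (by simp; omega)
    linarith

lemma potKer_nonneg (x : Z2) : 0 ≤ potKer x :=
  (diagVal_nonneg 0).trans (diagVal_le_potKer x 0 (by simp))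

/-- The logarithmic lower bound with the sharp constant `2/π`. -/
lemma log_le_potKer (x : Z2) (r : ℝ) (hr : 0 < r) (h : r ≤ norm2 x) :
    2 / Real.pi * Real.log r ≤ potKer x := by
  have hpi := Real.pi_pos
  set m := max (x.1 + x.2).natAbs (x.1 - x.2).natAbs with hm
  have hxm : norm2 x ≤ m := by
    rw [norm2]
    apply Real.sqrt_le_iff.2 ⟨by positivity, ?_⟩
    have h1 : ((x.1 + x.2 : ℤ) : ℝ) ^ 2 ≤ (m : ℝ) ^ 2 := by
      rw [sq_le_sq, abs_of_nonneg (by positivity : (0 : ℝ) ≤ m), ← Int.cast_abs,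
        Int.abs_eq_natAbs]
      exact_mod_cast le_max_left _ _
    have h2 : ((x.1 - x.2 : ℤ) : ℝ) ^ 2 ≤ (m : ℝ) ^ 2 := by
      rw [sq_le_sq, abs_of_nonneg (by positivity : (0 : ℝ) ≤ m), ← Int.cast_abs,
        Int.abs_eq_natAbs]
      exact_mod_cast le_max_right _ _
    push_cast at h1 h2
    nlinarith
  -- The diagonal value at `m / 2` suffices, since `|x| ≤ m ≤ 2 * (m / 2) + 1`.
  have h1 := diagVal_le_potKer x (m / 2) (by omega)
  refine le_trans ?_ ((log_le_diagVal (m / 2)).trans h1)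
  apply mul_le_mul_of_nonneg_left _ (by positivity)
  apply Real.log_le_log hr
  refine h.trans (hxm.trans ?_)
  exact_mod_cast (by omega : m ≤ 2 * (m / 2) + 1)

lemma fH_add_fV (x : Z2) : fH x + fV x = if x = (0, 0) then 1 else 0 := by
  have := potKer_laplace x
  unfold fH fV
  linarith

lemma fH_zero : fH (0, 0) = 1 / 2 := by
  have h := fH_add_fV (0, 0)
  have : fH (0, 0) = fV (0, 0) := by
    simp only [fH, fV, Prod.mk_add_mk, Prod.mk_sub_mk]
    norm_num
    rw [potKer_swap 0 1, potKer_swap 0 (-1)]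
  rw [if_pos rfl] at h
  linarith

lemma fV_zero : fV (0, 0) = 1 / 2 := by
  have h := fH_add_fV (0, 0)
  rw [if_pos rfl, fH_zero] at h
  linarith

end HV

/-! ### Functions of finitely many positions and the Markov property -/

namespace HV

/-- A function on trajectories that depends on the first `t` positions only. -/
def DepOn {α : Type*} (t : ℕ) (f : Path → α) : Prop :=
  ∀ y y' : Path, (∀ s < t, y s = y' s) → f y = f y'

/-- The trajectory that follows `c` for `t` steps and stays at the origin afterwards. -/
def extend (t : ℕ) (c : Fin t → Z2) : Path := fun s => if h : s < t then c ⟨s, h⟩ else (0, 0)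

lemma DepOn.eq_extend {α : Type*} {t : ℕ} {f : Path → α} (hf : DepOn t f) (y : Path) :
    f y = f (extend t fun i => y i) :=
  hf _ _ fun s hs => by simp [extend, hs]

lemma DepOn.measurable {α : Type*} [MeasurableSpace α] {t : ℕ} {f : Path → α} (hf : DepOn t f) :
    Measurable f := by
  have h1 : Measurable fun y : Path => (fun i : Fin t => y i) :=
    measurable_pi_lambda _ fun i => measurable_pi_apply _
  have h2 : Measurable fun c : Fin t → Z2 => f (extend t c) := measurable_of_countable _
  have : f = (fun c : Fin t → Z2 => f (extend t c)) ∘ fun y : Path => (fun i : Fin t => y i) :=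
    funext fun y => hf.eq_extend y
  rw [this]
  exact h2.comp h1

lemma DepOn.update {α : Type*} {t : ℕ} {f : Path → α} (hf : DepOn t f) (y : Path) (z : Z2) :
    f (Function.update y t z) = f y :=
  hf _ _ fun s hs => by simp [hs.ne]

/-- A function of the first `t` positions is integrated by summing over cylinder sets. -/
lemma lintegral_dep (μ : Measure Path) {t : ℕ} {g : Path → ℝ≥0∞} (hg : DepOn t g) :
    ∫⁻ y, g y ∂μ =
      ∑' c : Fin t → Z2, g (extend t c) * μ {y : Path | ∀ s < t, y s = extend t c s} := by
  have h1 : Measurable fun y : Path => (fun i : Fin t => y i) :=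
    measurable_pi_lambda _ fun i => measurable_pi_apply _
  have h2 : Measurable fun c : Fin t → Z2 => g (extend t c) := measurable_of_countable _
  calc ∫⁻ y, g y ∂μ = ∫⁻ y : Path, (fun c : Fin t → Z2 => g (extend t c)) (fun i : Fin t => y i) ∂μ :=
        lintegral_congr fun y => hg.eq_extend y
    _ = ∫⁻ c, g (extend t c) ∂(μ.map fun y : Path => (fun i : Fin t => y i)) :=
        (lintegral_map h2 h1).symm
    _ = _ := by
        rw [lintegral_countable']
        refine tsum_congr fun c => ?_
        rw [Measure.map_apply h1 (measurableSet_singleton c)]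
        congr 2
        ext y
        simp only [Set.mem_preimage, Set.mem_singleton_iff, Set.mem_ofPred_eq, funext_iff, extend]
        constructor
        · intro h s hs; rw [dif_pos hs]; exact h ⟨s, hs⟩
        · intro h i; have := h i i.2; rw [dif_pos i.2] at this; exact this

section

variable (q : ℝ) {n : ℕ} (hn : 0 < n) (r : ℝ) (ρ : Config)

lemma fseq_congr {t : ℕ} {y y' : Path} (h : ∀ s < t, y s = y' s) :
    ∀ u ≤ t, fseq n hn r ρ y u = fseq n hn r ρ y' u := by
  intro u
  induction u with
  | zero => intro _; rfl
  | succ u ih =>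
    intro hu
    simp only [fseq]
    rw [ih (by omega), h u (by omega)]

lemma fseq_depOn (t : ℕ) : DepOn t fun y => fseq n hn r ρ y t :=
  fun _ _ h => fseq_congr hn r ρ h t le_rfl

lemma fseq_update (t : ℕ) (y : Path) (z : Z2) :
    fseq n hn r ρ (Function.update y t z) (t + 1) =
      fapply n r (fseq n hn r ρ y t) (active n hn t) z := by
  have := (fseq_depOn hn r ρ t).update y z
  simp [fseq, this]

/-- The one-step Markov property for nonnegative functions, in terms of the transition
probabilities. -/
lemma lintegral_step_aux {μ : Measure Path} (hμ : IsFrozenLaw q n hn r ρ μ) (t : ℕ)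
    {g : Path → ℝ≥0∞} (hg : DepOn (t + 1) g) :
    ∫⁻ y, g y ∂μ = ∫⁻ y, ∑' z, fweight q n r (fseq n hn r ρ y t) (active n hn t) z *
      g (Function.update y t z) ∂μ := by
  have hdep : DepOn t fun y => ∑' z, fweight q n r (fseq n hn r ρ y t) (active n hn t) z *
      g (Function.update y t z) := by
    intro y y' h
    refine tsum_congr fun z => ?_
    rw [fseq_congr hn r ρ h t le_rfl]
    congr 1
    refine hg _ _ fun s hs => ?_
    rcases eq_or_ne s t with rfl | hne
    · simp
    · simp [hne, h s (by omega)]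
  rw [lintegral_dep μ hg, lintegral_dep μ hdep]
  rw [← (Fin.snocEquiv fun _ : Fin (t + 1) => Z2).tsum_eq, ENNReal.tsum_prod',
    ENNReal.tsum_comm]
  refine tsum_congr fun c => ?_
  rw [← ENNReal.tsum_mul_right]
  refine tsum_congr fun z => ?_
  have he : extend (t + 1) (Fin.snocEquiv (fun _ : Fin (t + 1) => Z2) (z, c)) =
      Function.update (extend t c) t z := by
    funext s
    rcases lt_trichotomy s t with h | rfl | h
    · simp only [extend, Fin.snocEquiv, Equiv.coe_fn_mk, Fin.snoc, Function.update_of_ne h.ne]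
      simp [h, Nat.lt_succ_of_lt h]
    · simp [extend, Fin.snocEquiv, Fin.snoc]
    · simp only [extend, Function.update_of_ne h.ne']
      rw [dif_neg (by omega), dif_neg (by omega)]
  rw [he, hμ, hμ, Finset.prod_range_succ]
  rw [(fseq_depOn hn r ρ t).update (extend t c) z, Function.update_self]
  have : ∏ s ∈ Finset.range t, fweight q n r (fseq n hn r ρ (Function.update (extend t c) t z) s)
        (active n hn s) (Function.update (extend t c) t z s) =
      ∏ s ∈ Finset.range t, fweight q n r (fseq n hn r ρ (extend t c) s)
        (active n hn s) (extend t c s) := by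
    refine Finset.prod_congr rfl fun s hs => ?_
    have hs' := Finset.mem_range.1 hs
    rw [Function.update_of_ne hs'.ne, fseq_congr hn r ρ (t := t) (y' := extend t c)
      (fun u hu => by simp [hu.ne]) s hs'.le]
  rw [this]
  ring

/-- The position of the walker whose turn it is at time `t`. -/
noncomputable def pos (t : ℕ) (y : Path) : Z2 := (fseq n hn r ρ y t).1 (active n hn t)

/-- The probability that a walker leaving a vertex with label `b` moves horizontally. -/
noncomputable def hprob (b : Bool) : ℝ := if b then 1 - q else q

open Classical in
/-- The conditional expectation of `g` given the first `t` positions, for `g` depending on the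
first `t + 1` positions. -/
noncomputable def stepE (t : ℕ) (g : Path → ℝ) (y : Path) : ℝ :=
  if pos hn r ρ t y ∈ bdry r then g (Function.update y t (pos hn r ρ t y)) else
    hprob q ((fseq n hn r ρ y t).2 (pos hn r ρ t y)) *
      ((g (Function.update y t (pos hn r ρ t y + (1, 0))) +
        g (Function.update y t (pos hn r ρ t y - (1, 0)))) / 2) +
    (1 - hprob q ((fseq n hn r ρ y t).2 (pos hn r ρ t y))) *
      ((g (Function.update y t (pos hn r ρ t y + (0, 1))) +
        g (Function.update y t (pos hn r ρ t y - (0, 1)))) / 2)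

lemma pos_depOn (t : ℕ) : DepOn t fun y => pos hn r ρ t y := fun y y' h => by
  simp only [pos]; rw [fseq_congr hn r ρ h t le_rfl]

lemma stepE_depOn (t : ℕ) {g : Path → ℝ} (hg : DepOn (t + 1) g) :
    DepOn t (stepE q hn r ρ t g) := by
  intro y y' h
  have hp : pos hn r ρ t y = pos hn r ρ t y' := pos_depOn hn r ρ t y y' h
  have hs := fseq_congr hn r ρ h t le_rfl
  have hu : ∀ z, g (Function.update y t z) = g (Function.update y' t z) := fun z => by
    refine hg _ _ fun s hs => ?_
    rcases eq_or_ne s t with rfl | hne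
    · simp
    · simp [hne, h s (by omega)]
  unfold stepE
  rw [hp, hs]
  simp only [hu]

variable {q}

lemma hprob_mem (hq : q ∈ Set.Ioc (0 : ℝ) 1) (b : Bool) : 0 ≤ hprob q b ∧ hprob q b ≤ 1 := by
  obtain ⟨h0, h1⟩ := hq
  unfold hprob
  split_ifs <;> constructor <;> linarith

lemma tsum_fweight (hq : q ∈ Set.Ioc (0 : ℝ) 1) (t : ℕ) {g : Path → ℝ} (h0 : ∀ y, 0 ≤ g y)
    (y : Path) :
    ∑' z, fweight q n r (fseq n hn r ρ y t) (active n hn t) z *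
      ENNReal.ofReal (g (Function.update y t z)) = ENNReal.ofReal (stepE q hn r ρ t g y) := by
  have hp : (fseq n hn r ρ y t).1 (active n hn t) = pos hn r ρ t y := rfl
  unfold stepE fweight
  rw [hp]
  set x := pos hn r ρ t y
  split_ifs with hx
  · rw [tsum_eq_single x]
    · simp
    · intro z hz; simp [hz]
  · unfold weight
    rw [hp]
    set b := (fseq n hn r ρ y t).2 x
    obtain ⟨hb0, hb1⟩ := hprob_mem hq b
    have e1 : (if b = true then 1 - q else q) = hprob q b := rfl
    have e2 : (if b = true then q else 1 - q) = 1 - hprob q b := by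
      unfold hprob; split_ifs <;> ring
    rw [e1, e2]
    obtain ⟨x1, x2⟩ := x
    rw [tsum_eq_sum (s := {((x1, x2) : Z2) + (1, 0), (x1, x2) - (1, 0), (x1, x2) + (0, 1),
      (x1, x2) - (0, 1)})]
    · rw [Finset.sum_insert, Finset.sum_insert, Finset.sum_insert, Finset.sum_singleton]
      · rw [if_pos (Or.inl rfl), if_pos (Or.inr rfl), if_neg, if_pos (Or.inl rfl), if_neg,
          if_pos (Or.inr rfl)]
        · have hh : 0 ≤ hprob q b / 2 := by linarith
          have hv : 0 ≤ (1 - hprob q b) / 2 := by linarith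
          rw [← ENNReal.ofReal_mul hh, ← ENNReal.ofReal_mul hh, ← ENNReal.ofReal_mul hv,
            ← ENNReal.ofReal_mul hv]
          have k : ∀ z, 0 ≤ g (Function.update y t z) := fun z => h0 _
          have m1 := mul_nonneg hv (k ((x1, x2) + (0, 1)))
          have m2 := mul_nonneg hv (k ((x1, x2) - (0, 1)))
          have m3 := mul_nonneg hh (k ((x1, x2) - (1, 0)))
          have m4 := mul_nonneg hh (k ((x1, x2) + (1, 0)))
          rw [← ENNReal.ofReal_add m1 m2, ← ENNReal.ofReal_add m3 (by positivity),
            ← ENNReal.ofReal_add m4 (by positivity)]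
          congr 1
          ring
        all_goals simp [Prod.ext_iff]
      all_goals simp [Prod.ext_iff] <;> omega
    · intro z hz
      simp only [Finset.mem_insert, Finset.mem_singleton, not_or] at hz
      rw [if_neg (by tauto), if_neg (by tauto), zero_mul]

lemma stepE_abs_le (hq : q ∈ Set.Ioc (0 : ℝ) 1) (t : ℕ) {g : Path → ℝ} {K : ℝ}
    (hK : ∀ y, |g y| ≤ K) (y : Path) : |stepE q hn r ρ t g y| ≤ K := by
  unfold stepE
  split_ifs
  · exact hK _
  · obtain ⟨hb0, hb1⟩ := hprob_mem hq ((fseq n hn r ρ y t).2 (pos hn r ρ t y))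
    set h := hprob q ((fseq n hn r ρ y t).2 (pos hn r ρ t y))
    have k1 := abs_le.1 (hK (Function.update y t (pos hn r ρ t y + (1, 0))))
    have k2 := abs_le.1 (hK (Function.update y t (pos hn r ρ t y - (1, 0))))
    have k3 := abs_le.1 (hK (Function.update y t (pos hn r ρ t y + (0, 1))))
    have k4 := abs_le.1 (hK (Function.update y t (pos hn r ρ t y - (0, 1))))
    rw [abs_le]
    constructor <;> nlinarith

lemma DepOn.integrable {μ : Measure Path} [IsProbabilityMeasure μ] {t : ℕ} {g : Path → ℝ}
    (hg : DepOn t g) {K : ℝ} (hK : ∀ y, |g y| ≤ K) : Integrable g μ :=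
  Integrable.of_bound hg.measurable.aestronglyMeasurable K (Eventually.of_forall hK)

/-- The one-step Markov property: a bounded function of the first `t + 1` positions has the same
mean as its conditional expectation given the first `t` positions. -/
lemma integral_step {μ : Measure Path} [IsProbabilityMeasure μ]
    (hμ : IsFrozenLaw q n hn r ρ μ) (hq : q ∈ Set.Ioc (0 : ℝ) 1) (t : ℕ)
    {g : Path → ℝ} (hg : DepOn (t + 1) g) {K : ℝ} (hK : ∀ y, |g y| ≤ K) :
    ∫ y, g y ∂μ = ∫ y, stepE q hn r ρ t g y ∂μ := by
  have hsd := stepE_depOn q hn r ρ t hg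
  have hsK := stepE_abs_le hn r ρ hq t hK
  -- Adding the bound `K` makes both sides nonnegative, as the Lebesgue integral requires.
  have key : ∫ y, (g y + K) ∂μ = ∫ y, (stepE q hn r ρ t g y + K) ∂μ := by
    have h0 : ∀ y, 0 ≤ g y + K := fun y => by have := (abs_le.1 (hK y)).1; linarith
    have h1 : ∀ y, 0 ≤ stepE q hn r ρ t g y + K := fun y => by
      have := (abs_le.1 (hsK y)).1; linarith
    have hm0 : DepOn (t + 1) fun y => g y + K := fun y y' h => by simp only [hg y y' h]
    have hm1 : DepOn t fun y => stepE q hn r ρ t g y + K := fun y y' h => by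
      simp only [hsd y y' h]
    rw [integral_eq_lintegral_of_nonneg_ae (Eventually.of_forall h0)
        hm0.measurable.aestronglyMeasurable,
      integral_eq_lintegral_of_nonneg_ae (Eventually.of_forall h1)
        hm1.measurable.aestronglyMeasurable,
      lintegral_step_aux q hn r ρ hμ t (g := fun y => ENNReal.ofReal (g y + K))
        (fun y y' h => by simp only [hg y y' h])]
    congr 1
    refine lintegral_congr fun y => ?_
    rw [tsum_fweight hn r ρ hq t (g := fun y => g y + K) h0]
    congr 1
    unfold stepE
    split_ifs
    · rfl
    · ring
  rw [integral_add (hg.integrable hK) (integrable_const _),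
    integral_add (hsd.integrable hsK) (integrable_const _)] at key
  linarith

end

end HV

/-! ### The accessible region and almost sure freezing -/

namespace HV

lemma norm2_nonneg (x : Z2) : 0 ≤ norm2 x := Real.sqrt_nonneg _

lemma norm2_sq (x : Z2) : norm2 x ^ 2 = (x.1 : ℝ) ^ 2 + (x.2 : ℝ) ^ 2 :=
  Real.sq_sqrt (by positivity)

lemma norm2_le_of_adj {x y : Z2} (h : adj x y) : norm2 x ≤ norm2 y + 1 := by
  have hN := norm2_nonneg y
  have hs := norm2_sq y
  have h1 : |(y.1 : ℝ)| ≤ norm2 y := Real.abs_le_sqrt (by nlinarith [sq_nonneg (y.2 : ℝ)])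
  have h2 : |(y.2 : ℝ)| ≤ norm2 y := Real.abs_le_sqrt (by nlinarith [sq_nonneg (y.1 : ℝ)])
  rw [abs_le] at h1 h2
  obtain ⟨a, b⟩ := x
  obtain ⟨c, d⟩ := y
  unfold adj at h
  simp only at *
  apply Real.sqrt_le_iff.2 ⟨by positivity, ?_⟩
  simp only
  have hc : (a = c + 1 ∧ b = d) ∨ (a = c - 1 ∧ b = d) ∨ (a = c ∧ b = d + 1) ∨
      (a = c ∧ b = d - 1) := by
    rcases abs_cases (a - c) with h3 | h3 <;> rcases abs_cases (b - d) with h4 | h4 <;> omega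
  rcases hc with ⟨rfl, rfl⟩ | ⟨rfl, rfl⟩ | ⟨rfl, rfl⟩ | ⟨rfl, rfl⟩ <;> push_cast <;> nlinarith

lemma mem_ballFinset (R : ℝ) (x : Z2) : x ∈ ballFinset R ↔ norm2 x < R := by
  unfold ballFinset
  rw [Finset.mem_filter, and_iff_right_iff_imp]
  intro h
  have h1 : |(x.1 : ℝ)| ≤ norm2 x := Real.abs_le_sqrt (by nlinarith [sq_nonneg (x.2 : ℝ)])
  have h2 : |(x.2 : ℝ)| ≤ norm2 x := Real.abs_le_sqrt (by nlinarith [sq_nonneg (x.1 : ℝ)])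
  have hR : R ≤ (⌈R⌉ : ℝ) := Int.le_ceil R
  rw [abs_le] at h1 h2
  have a1 : -⌈R⌉ ≤ x.1 := by exact_mod_cast (by push_cast; linarith : ((-⌈R⌉ : ℤ) : ℝ) ≤ x.1)
  have a2 : x.1 ≤ ⌈R⌉ := by exact_mod_cast (by linarith : (x.1 : ℝ) ≤ (⌈R⌉ : ℤ))
  have a3 : -⌈R⌉ ≤ x.2 := by exact_mod_cast (by push_cast; linarith : ((-⌈R⌉ : ℤ) : ℝ) ≤ x.2)
  have a4 : x.2 ≤ ⌈R⌉ := by exact_mod_cast (by linarith : (x.2 : ℝ) ≤ (⌈R⌉ : ℤ))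
  rw [Finset.mem_Icc]
  exact ⟨⟨a1, a3⟩, ⟨a2, a4⟩⟩

/-- The region accessible to the frozen walk: the ball together with its outer boundary. -/
def region (r : ℝ) : Set Z2 := ball r ∪ bdry r

lemma region_norm2 {r : ℝ} {x : Z2} (h : x ∈ region r) : norm2 x < r + 1 := by
  rcases h with h | ⟨-, y, hxy, hy⟩
  · have : norm2 x < r := h
    linarith
  · have : norm2 y < r := hy
    linarith [norm2_le_of_adj hxy]

/-- `z` is one of the four nearest neighbors of `x`. -/
def Nbr (x z : Z2) : Prop :=
  z = x + (1, 0) ∨ z = x - (1, 0) ∨ z = x + (0, 1) ∨ z = x - (0, 1)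

lemma Nbr.region {r : ℝ} {x z : Z2} (h : Nbr x z) (hx : x ∈ ball r) : z ∈ region r := by
  by_cases hz : z ∈ ball r
  · exact Or.inl hz
  · refine Or.inr ⟨hz, x, ?_, hx⟩
    obtain ⟨a, b⟩ := x
    rcases h with rfl | rfl | rfl | rfl <;> simp [adj]

lemma Nbr.ne {x z : Z2} (h : Nbr x z) : z ≠ x := by
  obtain ⟨a, b⟩ := x
  rcases h with rfl | rfl | rfl | rfl <;> simp

lemma sum_apply' {n : ℕ} (φ : Z2 → ℝ) (s : State n) (i : Fin n) (z : Z2) :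
    ∑ j, φ ((apply' n s i z).1 j) = ∑ j, φ (s.1 j) - φ (s.1 i) + φ z := by
  have h1 : ∀ j, φ ((apply' n s i z).1 j) = Function.update (fun j => φ (s.1 j)) i (φ z) j := by
    intro j
    rcases eq_or_ne j i with rfl | h
    · simp [apply']
    · simp [apply', h]
  simp_rw [h1]
  rw [Finset.sum_update_of_mem (Finset.mem_univ i),
    ← Finset.add_sum_erase _ _ (Finset.mem_univ i), Finset.sdiff_singleton_eq_erase]
  ring

lemma sum_wt_apply' {n : ℕ} {B : Finset Z2} (s : State n) (i : Fin n) (z : Z2)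
    (hB : s.1 i ∈ B) :
    ∑ v ∈ B, wt (apply' n s i z).2 v = ∑ v ∈ B, wt s.2 v - wt s.2 (s.1 i) +
      (if z.2 = (s.1 i).2 then fH (s.1 i) else fV (s.1 i)) := by
  rw [← Finset.add_sum_erase _ _ hB, ← Finset.add_sum_erase B (fun v => wt s.2 v) hB]
  have h1 : wt (apply' n s i z).2 (s.1 i) =
      if z.2 = (s.1 i).2 then fH (s.1 i) else fV (s.1 i) := by
    simp only [wt, apply', Function.update_self]
    split_ifs <;> simp_all
  have h2 : ∑ v ∈ B.erase (s.1 i), wt (apply' n s i z).2 v = ∑ v ∈ B.erase (s.1 i), wt s.2 v := by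
    refine Finset.sum_congr rfl fun v hv => ?_
    simp [wt, apply', Finset.ne_of_mem_erase hv]
  rw [h1, h2]
  ring

lemma fapply_frozen {n : ℕ} {r : ℝ} {s : State n} {i : Fin n} (h : s.1 i ∈ bdry r) (z : Z2) :
    fapply n r s i z = s := by rw [fapply, if_pos h]

lemma fapply_active {n : ℕ} {r : ℝ} {s : State n} {i : Fin n} (h : s.1 i ∉ bdry r) (z : Z2) :
    fapply n r s i z = apply' n s i z := by rw [fapply, if_neg h]

section

variable {q : ℝ} {n : ℕ} (hn : 0 < n) (r : ℝ) (ρ : Config)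

/-- The positions to which the active walker can move at time `t`. -/
def Opt (t : ℕ) (y : Path) (z : Z2) : Prop :=
  (pos hn r ρ t y ∈ bdry r ∧ z = pos hn r ρ t y) ∨
    (pos hn r ρ t y ∉ bdry r ∧ Nbr (pos hn r ρ t y) z)

lemma stepE_congr (t : ℕ) (y : Path) {g g' : Path → ℝ}
    (h : ∀ z, Opt hn r ρ t y z → g (Function.update y t z) = g' (Function.update y t z)) :
    stepE q hn r ρ t g y = stepE q hn r ρ t g' y := by
  unfold stepE
  split_ifs with hx
  · exact h _ (Or.inl ⟨hx, rfl⟩)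
  · rw [h _ (Or.inr ⟨hx, Or.inl rfl⟩), h _ (Or.inr ⟨hx, Or.inr (Or.inl rfl)⟩),
      h _ (Or.inr ⟨hx, Or.inr (Or.inr (Or.inl rfl))⟩),
      h _ (Or.inr ⟨hx, Or.inr (Or.inr (Or.inr rfl))⟩)]

lemma stepE_const (t : ℕ) (y : Path) (c : ℝ) : stepE q hn r ρ t (fun _ => c) y = c := by
  unfold stepE
  split_ifs
  · rfl
  · ring

/-- All walkers have stayed in the accessible region up to time `t`. -/
def Good (t : ℕ) (y : Path) : Prop := ∀ s ≤ t, ∀ i, (fseq n hn r ρ y s).1 i ∈ region r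

lemma good_depOn (t : ℕ) : DepOn t (Good hn r ρ t) := fun y y' h => by
  unfold Good
  exact propext (forall_congr' fun s => forall_congr' fun hs => by
    rw [fseq_congr hn r ρ h s hs])

lemma good_update {t : ℕ} {y : Path} (hg : Good hn r ρ t y) {z : Z2}
    (hz : Opt hn r ρ t y z) : Good hn r ρ (t + 1) (Function.update y t z) := by
  intro s hs i
  rcases Nat.le_succ_iff.1 hs with hs | rfl
  · rw [fseq_congr hn r ρ (t := t) (y' := y) (fun u hu => by simp [hu.ne]) s hs]
    exact hg s hs i
  · rw [fseq_update]
    rcases hz with ⟨hx, -⟩ | ⟨hx, hz⟩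
    · rw [fapply_frozen hx]; exact hg t le_rfl i
    · rw [fapply_active hx]
      rcases eq_or_ne i (active n hn t) with rfl | hi
      · have hb : pos hn r ρ t y ∈ ball r := (hg t le_rfl (active n hn t)).resolve_right hx
        simpa [apply'] using hz.region hb
      · simpa [apply', hi] using hg t le_rfl i

open Classical in
/-- The function `F`, cut off where the walk has left the accessible region. -/
noncomputable def cut (t : ℕ) (F : Path → ℝ) (y : Path) : ℝ := if Good hn r ρ t y then F y else 0

lemma cut_depOn {t : ℕ} {F : Path → ℝ} (hF : DepOn t F) : DepOn t (cut hn r ρ t F) :=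
  fun y y' h => by
    unfold cut
    rw [good_depOn hn r ρ t y y' h, hF y y' h]

/-- The accessible region cannot be left in one step, so cutting off commutes with the
conditional expectation. -/
lemma stepE_cut (t : ℕ) (F : Path → ℝ) :
    stepE q hn r ρ t (cut hn r ρ (t + 1) F) = cut hn r ρ t (stepE q hn r ρ t F) := by
  funext y
  by_cases hg : Good hn r ρ t y
  · rw [cut, if_pos hg]
    refine stepE_congr hn r ρ t y fun z hz => ?_
    rw [cut, if_pos (good_update hn r ρ hg hz)]
  · rw [cut, if_neg hg, ← stepE_const hn r ρ t y 0 (q := q)]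
    refine stepE_congr hn r ρ t y fun z _ => ?_
    rw [cut, if_neg]
    intro h
    refine hg fun s hs i => ?_
    have := h s (by omega) i
    rwa [fseq_congr hn r ρ (t := t) (y' := y) (fun u hu => by simp [hu.ne]) s hs] at this

lemma zero_mem_region (hr : 0 < r) : ((0, 0) : Z2) ∈ region r := Or.inl (by simpa [ball, norm2])

/-- Trajectories are arbitrary sequences of lattice points, so that the walkers remain in the
accessible region only almost surely. -/
lemma ae_good (hr : 0 < r) {μ : Measure Path} [IsProbabilityMeasure μ]
    (hμ : IsFrozenLaw q n hn r ρ μ) (hq : q ∈ Set.Ioc (0 : ℝ) 1) :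
    ∀ᵐ y ∂μ, ∀ t, Good hn r ρ t y := by
  have hd : ∀ t, DepOn t (fun _ : Path => (1 : ℝ)) := fun t y y' h => rfl
  have hb : ∀ t y, |cut hn r ρ t (fun _ => (1 : ℝ)) y| ≤ 1 := fun t y => by
    unfold cut; split_ifs <;> simp
  have h1 : ∀ t, ∫ y, cut hn r ρ t (fun _ => (1 : ℝ)) y ∂μ = 1 := by
    intro t
    induction t with
    | zero =>
      have : ∀ y, cut hn r ρ 0 (fun _ => (1 : ℝ)) y = 1 := fun y => by
        rw [cut, if_pos]
        intro s hs i
        obtain rfl : s = 0 := by omega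
        exact zero_mem_region r hr
      simp [this]
    | succ t ih =>
      rw [integral_step hn r ρ hμ hq t (cut_depOn hn r ρ (hd _)) (hb _), stepE_cut]
      simp only [show stepE q hn r ρ t (fun _ => (1 : ℝ)) = fun _ => 1 from
        funext fun y => stepE_const hn r ρ t y 1]
      exact ih
  rw [ae_all_iff]
  intro t
  have hi : Integrable (cut hn r ρ t (fun _ => (1 : ℝ))) μ :=
    (cut_depOn hn r ρ (hd t)).integrable (hb t)
  have h2 : ∫ y, (1 - cut hn r ρ t (fun _ => (1 : ℝ)) y) ∂μ = 0 := by
    rw [integral_sub (integrable_const _) hi, h1]; simp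
  have h0 : 0 ≤ fun y => 1 - cut hn r ρ t (fun _ => (1 : ℝ)) y := fun y => by
    have := (abs_le.1 (hb t y)).2; simpa using this
  rw [integral_eq_zero_iff_of_nonneg h0 ((integrable_const _).sub hi)] at h2
  filter_upwards [h2] with y hy
  by_contra hg
  simp [cut, hg] at hy

/-- The sum of the squared distances of the walkers from the origin. -/
noncomputable def sqSum (t : ℕ) (y : Path) : ℝ := ∑ i, norm2 ((fseq n hn r ρ y t).1 i) ^ 2

open Classical in
/-- The indicator that the walker whose turn it is at time `t` is not frozen. -/
noncomputable def moveInd (t : ℕ) (y : Path) : ℝ := if pos hn r ρ t y ∈ bdry r then 0 else 1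

lemma sqSum_depOn (t : ℕ) : DepOn t (sqSum hn r ρ t) := fun y y' h => by
  unfold sqSum; rw [fseq_congr hn r ρ h t le_rfl]

lemma moveInd_depOn (t : ℕ) : DepOn t (moveInd hn r ρ t) := fun y y' h => by
  have := pos_depOn hn r ρ t y y' h
  simp only at this
  unfold moveInd; rw [this]

/-- Each step of an unfrozen walker increases its mean squared distance by one, whatever the
labels. -/
lemma stepE_sqSum (t : ℕ) (y : Path) :
    stepE q hn r ρ t (sqSum hn r ρ (t + 1)) y = sqSum hn r ρ t y + moveInd hn r ρ t y := by
  unfold stepE moveInd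
  split_ifs with hx
  · simp [sqSum, fseq_update, fapply_frozen hx]
  · have h : ∀ z, sqSum hn r ρ (t + 1) (Function.update y t z) =
        sqSum hn r ρ t y - norm2 (pos hn r ρ t y) ^ 2 + norm2 z ^ 2 := fun z => by
      simp only [sqSum, fseq_update, fapply_active hx]
      exact sum_apply' (fun v => norm2 v ^ 2) _ _ _
    simp only [h, norm2_sq]
    push_cast [Prod.fst_add, Prod.snd_add, Prod.fst_sub, Prod.snd_sub]
    ring

/-- Almost surely all walkers are eventually frozen: the expected total number of moves is
finite, by comparison with the squared distance from the origin. -/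
lemma ae_frozen (hr : 0 < r) {μ : Measure Path} [IsProbabilityMeasure μ]
    (hμ : IsFrozenLaw q n hn r ρ μ) (hq : q ∈ Set.Ioc (0 : ℝ) 1) :
    ∀ᵐ y ∂μ, ∃ t, ∀ i, (fseq n hn r ρ y t).1 i ∈ bdry r := by
  have hsb : ∀ t y, |cut hn r ρ t (sqSum hn r ρ t) y| ≤ n * (r + 1) ^ 2 := by
    intro t y
    unfold cut
    split_ifs with hg
    · have h1 : ∀ i, norm2 ((fseq n hn r ρ y t).1 i) ^ 2 ≤ (r + 1) ^ 2 := fun i =>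
        pow_le_pow_left₀ (norm2_nonneg _) (region_norm2 (hg t le_rfl i)).le 2
      rw [abs_of_nonneg (Finset.sum_nonneg fun i _ => sq_nonneg _)]
      calc sqSum hn r ρ t y ≤ ∑ _i : Fin n, (r + 1) ^ 2 := Finset.sum_le_sum fun i _ => h1 i
        _ = _ := by simp
    · rw [abs_zero]; positivity
  have hmb : ∀ t y, |moveInd hn r ρ t y| ≤ 1 := fun t y => by
    unfold moveInd; split_ifs <;> simp
  have hmi : ∀ t, Integrable (moveInd hn r ρ t) μ := fun t =>
    (moveInd_depOn hn r ρ t).integrable (hmb t)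
  have hgood := ae_good hn r ρ hr hμ hq
  have hstep : ∀ T, ∑ t ∈ Finset.range T, ∫ y, moveInd hn r ρ t y ∂μ =
      ∫ y, cut hn r ρ T (sqSum hn r ρ T) y ∂μ := by
    intro T
    induction T with
    | zero =>
      simp [cut, sqSum, fseq, norm2]
    | succ T ih =>
      rw [Finset.sum_range_succ, ih,
        integral_step hn r ρ hμ hq T (cut_depOn hn r ρ (sqSum_depOn hn r ρ _)) (hsb _), stepE_cut,
        ← integral_add ((cut_depOn hn r ρ (sqSum_depOn hn r ρ T)).integrable (hsb T)) (hmi T)]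
      refine integral_congr_ae ?_
      filter_upwards [hgood] with y hy
      simp only [cut, if_pos (hy T), stepE_sqSum]
  have hms : ∀ t, MeasurableSet {y : Path | pos hn r ρ t y ∉ bdry r} := fun t =>
    ((pos_depOn hn r ρ t).measurable (MeasurableSet.of_discrete (s := (bdry r)ᶜ)))
  have hIe : ∀ t, ∫ y, moveInd hn r ρ t y ∂μ = μ.real {y : Path | pos hn r ρ t y ∉ bdry r} := by
    intro t
    rw [← integral_indicator_one (hms t)]
    congr 1
    funext y
    by_cases hx : pos hn r ρ t y ∈ bdry r <;> simp [moveInd, Set.indicator, hx]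
  have hsum : Summable fun t => μ.real {y : Path | pos hn r ρ t y ∉ bdry r} := by
    refine summable_of_sum_range_le (c := n * (r + 1) ^ 2) (fun t => measureReal_nonneg) fun T => ?_
    simp_rw [← hIe]
    rw [hstep]
    have h := norm_integral_le_of_norm_le_const (μ := μ) (C := n * (r + 1) ^ 2)
      (f := cut hn r ρ T (sqSum hn r ρ T)) (Eventually.of_forall (hsb T))
    simp only [probReal_univ, mul_one] at h
    exact (le_abs_self _).trans h
  have hne : ∑' t, μ {y : Path | pos hn r ρ t y ∉ bdry r} ≠ ⊤ := by
    have h := hsum.tsum_ofReal_ne_top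
    simpa [Measure.real] using h
  filter_upwards [ae_eventually_notMem hne] with y hy
  obtain ⟨T, hT⟩ := eventually_atTop.1 hy
  have hpersist : ∀ i t u, t ≤ u → (fseq n hn r ρ y t).1 i ∈ bdry r →
      (fseq n hn r ρ y u).1 i ∈ bdry r := by
    intro i t u htu h
    induction u, htu using Nat.le_induction with
    | base => exact h
    | succ u hu ih =>
      simp only [fseq, fapply]
      split_ifs with hf
      · exact ih
      · have hi : i ≠ active n hn u := by rintro rfl; exact hf ih
        simpa [apply', hi] using ih
  -- Walker `i` has its turn at time `n * T + i ≥ T`, when no active walker is unfrozen.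
  refine ⟨n * T + n, fun i => ?_⟩
  have hTi := hT (n * T + i) (by nlinarith [i.2])
  have hact : active n hn (n * T + i) = i := by
    ext; simp [active, Nat.mod_eq_of_lt i.2]
  simp only [not_not, pos, hact] at hTi
  exact hpersist i _ _ (by omega) hTi

end

end HV

/-! ### The martingale and optional stopping -/

namespace HV

/-- The potential kernel plus the indicator of the origin. The indicator counts the walkers
sitting at the origin, so that departures from the origin are turned into returns. -/
noncomputable def alpha (x : Z2) : ℝ := potKer x + if x = (0, 0) then 1 else 0

lemma potKer_le_alpha (x : Z2) : potKer x ≤ alpha x := by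
  unfold alpha; split_ifs <;> linarith

lemma alpha_zero : alpha (0, 0) = 1 := by simp [alpha, potKer_zero]

section

variable {q : ℝ} {n : ℕ} (hn : 0 < n) (r : ℝ) (ρ : Config)

/-- The number of returns to the origin up to time `t` along the trajectory `y`. -/
noncomputable def ret (t : ℕ) (y : Path) : ℕ := returns n (fun u => fseq n hn r ρ y u) t

open Classical in
lemma ret_succ (t : ℕ) (y : Path) : ret hn r ρ (t + 1) y = ret hn r ρ t y +
    if ∃ i, (fseq n hn r ρ y t).1 i ≠ (0, 0) ∧ (fseq n hn r ρ y (t + 1)).1 i = (0, 0)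
      then 1 else 0 := by
  unfold ret returns
  have hI : Finset.Icc 1 (t + 1) = insert (t + 1) (Finset.Icc 1 t) := by
    ext; simp only [Finset.mem_insert, Finset.mem_Icc]; omega
  rw [hI, Finset.filter_insert]
  simp only [Nat.add_sub_cancel]
  split_ifs with h
  · rw [Finset.card_insert_of_notMem (by simp)]
  · rfl

lemma ret_zero (y : Path) : ret hn r ρ 0 y = 0 := by simp [ret, returns]

lemma ret_depOn (t : ℕ) : DepOn t (ret hn r ρ t) := by
  induction t with
  | zero => intro y y' _; rw [ret_zero, ret_zero]
  | succ t ih =>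
    intro y y' h
    rw [ret_succ, ret_succ, ih y y' fun s hs => h s (by omega),
      fseq_congr hn r ρ h t (by omega), fseq_congr hn r ρ h (t + 1) le_rfl]

lemma ret_mono (y : Path) : Monotone fun t => ret hn r ρ t y :=
  monotone_nat_of_le_succ fun t => by rw [ret_succ]; omega

/-- The process whose conditional drift vanishes: the total of `alpha` over the walkers, plus
`c` times the total weight of the labels, minus the number of returns. -/
noncomputable def mart (c : ℝ) (t : ℕ) (y : Path) : ℝ :=
  ∑ i, alpha ((fseq n hn r ρ y t).1 i) +
    c * ∑ v ∈ ballFinset (r + 1), wt (fseq n hn r ρ y t).2 v - ret hn r ρ t y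

lemma mart_depOn (c : ℝ) (t : ℕ) : DepOn t (mart hn r ρ c t) := fun y y' h => by
  unfold mart
  rw [fseq_congr hn r ρ h t le_rfl, ret_depOn hn r ρ t y y' h]

/-- The turn of a frozen walker leaves the process unchanged. -/
lemma mart_update_frozen (c : ℝ) (t : ℕ) (y : Path) (z : Z2) (hx : pos hn r ρ t y ∈ bdry r) :
    mart hn r ρ c (t + 1) (Function.update y t z) = mart hn r ρ c t y := by
  have h1 := fseq_update hn r ρ t y z
  have h2 : fseq n hn r ρ (Function.update y t z) t = fseq n hn r ρ y t :=
    (fseq_depOn hn r ρ t).update y z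
  have h3 := (ret_depOn hn r ρ t).update y z
  rw [fapply_frozen hx] at h1
  unfold mart
  rw [ret_succ, h1, h2, h3, if_neg (by rintro ⟨i, hi, hi'⟩; exact hi hi')]
  simp

/-- The increment of the process when the active walker moves to `z`. A step is charged `-1`
when it departs from the origin, and an arrival at the origin is cancelled by the count of
returns. The label left behind is read off from the direction of the step. -/
lemma mart_update_active (c : ℝ) (t : ℕ) (y : Path) (z : Z2) (hx : pos hn r ρ t y ∉ bdry r)
    (hb : pos hn r ρ t y ∈ ball r) (hz : Nbr (pos hn r ρ t y) z) :
    mart hn r ρ c (t + 1) (Function.update y t z) = mart hn r ρ c t y +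
      (potKer z - potKer (pos hn r ρ t y) - if pos hn r ρ t y = (0, 0) then 1 else 0) +
      c * ((if z.2 = (pos hn r ρ t y).2 then fH (pos hn r ρ t y) else fV (pos hn r ρ t y)) -
        wt (fseq n hn r ρ y t).2 (pos hn r ρ t y)) := by
  have h1 := fseq_update hn r ρ t y z
  have h2 : fseq n hn r ρ (Function.update y t z) t = fseq n hn r ρ y t :=
    (fseq_depOn hn r ρ t).update y z
  have h3 := (ret_depOn hn r ρ t).update y z
  rw [fapply_active hx] at h1
  have hB : (fseq n hn r ρ y t).1 (active n hn t) ∈ ballFinset (r + 1) := by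
    rw [mem_ballFinset]
    have : norm2 (pos hn r ρ t y) < r := hb
    change norm2 (pos hn r ρ t y) < r + 1
    linarith
  unfold mart
  rw [ret_succ, h1, h2, h3, sum_apply', sum_wt_apply' _ _ _ hB]
  have hp : (fseq n hn r ρ y t).1 (active n hn t) = pos hn r ρ t y := rfl
  rw [hp]
  have hret : (∃ i, (fseq n hn r ρ y t).1 i ≠ (0, 0) ∧
      (apply' n (fseq n hn r ρ y t) (active n hn t) z).1 i = (0, 0)) ↔
      (pos hn r ρ t y ≠ (0, 0) ∧ z = (0, 0)) := by
    constructor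
    · rintro ⟨i, hi, hi'⟩
      rcases eq_or_ne i (active n hn t) with rfl | hia
      · exact ⟨hi, by simpa [apply'] using hi'⟩
      · exact absurd (by simpa [apply', hia] using hi') hi
    · rintro ⟨hi, hi'⟩
      exact ⟨active n hn t, hi, by simp [apply', hi']⟩
  simp only [hret, alpha]
  have hne := hz.ne
  set x := pos hn r ρ t y
  by_cases hx0 : x = (0, 0)
  · have hz0 : z ≠ (0, 0) := fun h => hne (h.trans hx0.symm)
    simp only [hx0, hz0]
    simp
    ring
  · by_cases hz0 : z = (0, 0)
    · simp only [hz0]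
      simp [hx0]
      ring
    · simp only [hx0, hz0]
      simp
      ring

/-- The conditional drift of `mart` vanishes. Away from the origin `f_V = -f_H`, so the drift
of the potential kernel is `2 (2q - 1) wt`, which cancels against the drift `-2 q wt` of the
label weights times `(2q - 1)/q`. At the origin both weights are `1/2`. -/
lemma stepE_mart (hq : q ≠ 0) (t : ℕ) (y : Path) (hg : Good hn r ρ t y) :
    stepE q hn r ρ t (mart hn r ρ ((2 * q - 1) / q) (t + 1)) y =
      mart hn r ρ ((2 * q - 1) / q) t y := by
  unfold stepE
  split_ifs with hx
  · exact mart_update_frozen hn r ρ _ t y _ hx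
  · have hb : pos hn r ρ t y ∈ ball r := (hg t le_rfl (active n hn t)).resolve_right hx
    have hu := fun z hz => mart_update_active hn r ρ ((2 * q - 1) / q) t y z hx hb hz
    rw [hu _ (Or.inl rfl), hu _ (Or.inr (Or.inl rfl)), hu _ (Or.inr (Or.inr (Or.inl rfl))),
      hu _ (Or.inr (Or.inr (Or.inr rfl)))]
    have l1 : ∀ x : Z2, (x + (1, 0)).2 = x.2 := fun x => by simp
    have l2 : ∀ x : Z2, (x - (1, 0)).2 = x.2 := fun x => by simp
    have l3 : ∀ x : Z2, (x + (0, 1)).2 ≠ x.2 := fun x => by simp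
    have l4 : ∀ x : Z2, (x - (0, 1)).2 ≠ x.2 := fun x => by simp
    rw [if_pos (l1 _), if_pos (l2 _), if_neg (l3 _), if_neg (l4 _)]
    set x := pos hn r ρ t y
    have eH : potKer (x + (0, 1)) + potKer (x - (0, 1)) = 4 * fH x + 2 * potKer x := by
      unfold fH; ring
    have eV : potKer (x + (1, 0)) + potKer (x - (1, 0)) = 4 * fV x + 2 * potKer x := by
      unfold fV; ring
    have hs := fH_add_fV x
    by_cases hx0 : x = (0, 0)
    · have e1 := fH_zero
      have e2 := fV_zero
      rw [hx0] at eH eV ⊢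
      have hw : wt (fseq n hn r ρ y t).2 (0, 0) = 1 / 2 := by
        unfold wt; split_ifs <;> assumption
      rw [if_pos rfl, hw]
      rw [e1] at eH ⊢
      rw [e2] at eV ⊢
      set h := hprob q ((fseq n hn r ρ y t).2 (0, 0))
      linear_combination (h / 2) * eV + ((1 - h) / 2) * eH
    · rw [if_neg hx0] at hs ⊢
      have hV : fV x = -fH x := by linarith
      unfold wt hprob
      rw [hV] at eV ⊢
      split_ifs
      · have : (2 * q - 1) / q * q = 2 * q - 1 := div_mul_cancel₀ _ hq
        linear_combination ((1 - q) / 2) * eV + (q / 2) * eH - 2 * fH x * this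
      · have : (2 * q - 1) / q * q = 2 * q - 1 := div_mul_cancel₀ _ hq
        linear_combination (q / 2) * eV + ((1 - q) / 2) * eH + 2 * fH x * this

/-- The set of times whose least element is the stopping time `tau`. -/
def stopSet (k : ℕ) (y : Path) : Set ℕ :=
  {t : ℕ | ret hn r ρ t y = k ∨ ∀ i, (fseq n hn r ρ y t).1 i ∈ bdry r}

/-- The stopping time has occurred by time `T`. -/
def Hit (k T : ℕ) (y : Path) : Prop := ∃ s ≤ T, s ∈ stopSet hn r ρ k y

lemma tau_eq (k : ℕ) (y : Path) : tau n hn r ρ k y = sInf (stopSet hn r ρ k y) := rfl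

lemma mem_stopSet_congr {k t : ℕ} {y y' : Path} (h : ∀ s < t, y s = y' s) {u : ℕ} (hu : u ≤ t) :
    u ∈ stopSet hn r ρ k y ↔ u ∈ stopSet hn r ρ k y' := by
  unfold stopSet
  simp only [Set.mem_ofPred_eq]
  rw [fseq_congr hn r ρ h u hu, ret_depOn hn r ρ u y y' fun s hs => h s (by omega)]

lemma hit_depOn (k T : ℕ) : DepOn T (Hit hn r ρ k T) := fun y y' h => by
  unfold Hit
  exact propext (exists_congr fun s => and_congr_right fun hs =>
    mem_stopSet_congr hn r ρ h hs)

lemma Hit.tau_mem {k T : ℕ} {y : Path} (h : Hit hn r ρ k T y) :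
    tau n hn r ρ k y ∈ stopSet hn r ρ k y ∧ tau n hn r ρ k y ≤ T := by
  obtain ⟨s, hs, hm⟩ := h
  exact ⟨Nat.sInf_mem ⟨s, hm⟩, (Nat.sInf_le hm).trans hs⟩

lemma tau_congr {k t : ℕ} {y y' : Path} (h : ∀ s < t, y s = y' s) (hy : Hit hn r ρ k t y) :
    tau n hn r ρ k y = tau n hn r ρ k y' := by
  have hy' : Hit hn r ρ k t y' := by rwa [← hit_depOn hn r ρ k t y y' h]
  obtain ⟨h1, h2⟩ := hy.tau_mem
  obtain ⟨h3, h4⟩ := hy'.tau_mem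
  exact le_antisymm (Nat.sInf_le ((mem_stopSet_congr hn r ρ h h4).2 h3))
    (Nat.sInf_le ((mem_stopSet_congr hn r ρ h h2).1 h1))

open Classical in
/-- The stopping time truncated at `T`. When the stopping set is empty this is `T`, whereas
`tau` takes the junk value `0`. -/
noncomputable def sig (k T : ℕ) (y : Path) : ℕ :=
  if Hit hn r ρ k T y then tau n hn r ρ k y else T

lemma sig_le (k T : ℕ) (y : Path) : sig hn r ρ k T y ≤ T := by
  unfold sig
  split_ifs with h
  · exact h.tau_mem.2
  · exact le_rfl

lemma sig_congr {k t : ℕ} {y y' : Path} (h : ∀ s < t, y s = y' s) :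
    sig hn r ρ k t y = sig hn r ρ k t y' := by
  unfold sig
  rw [← hit_depOn hn r ρ k t y y' h]
  split_ifs with hh
  · exact tau_congr hn r ρ h hh
  · rfl

/-- A process adapted to the trajectory and stopped at `sig` is still adapted. -/
lemma stopped_depOn {α : Type*} (k : ℕ) {f : ℕ → Path → α} (hf : ∀ t, DepOn t (f t)) (T : ℕ) :
    DepOn T fun y => f (sig hn r ρ k T y) y := by
  intro y y' h
  simp only [sig_congr hn r ρ h]
  exact hf _ y y' fun s hs => h s (hs.trans_le (sig_le hn r ρ k T y'))

lemma eventually_sig {k : ℕ} {y : Path} (h : ∃ t, ∀ i, (fseq n hn r ρ y t).1 i ∈ bdry r) :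
    ∀ᶠ T in atTop, sig hn r ρ k T y = tau n hn r ρ k y := by
  obtain ⟨t, ht⟩ := h
  filter_upwards [eventually_ge_atTop t] with T hT
  rw [sig, if_pos ⟨t, hT, Or.inr ht⟩]

/-- The number of returns grows by at most one per step, so it cannot pass `k` before it
equals `k`. -/
lemma ret_le_of_not_stop (k : ℕ) (y : Path) (m : ℕ) (h : ∀ s < m, s ∉ stopSet hn r ρ k y) :
    ret hn r ρ m y ≤ k := by
  induction m with
  | zero => rw [ret_zero]; omega
  | succ m ih =>
    have h1 := ih fun s hs => h s (by omega)
    have h2 : ret hn r ρ m y ≠ k := fun e => h m (by omega) (Or.inl e)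
    rw [ret_succ]
    split_ifs <;> omega

lemma ret_sig_le (k T : ℕ) (y : Path) : ret hn r ρ (sig hn r ρ k T y) y ≤ k := by
  refine ret_le_of_not_stop hn r ρ k y _ fun s hs hm => ?_
  unfold sig at hs
  split_ifs at hs with hh
  · exact Nat.notMem_of_lt_sInf hs hm
  · exact hh ⟨s, hs.le, hm⟩

/-- The stopped process, cut off outside the accessible region. -/
noncomputable def stoppedMart (c : ℝ) (k T : ℕ) : Path → ℝ :=
  cut hn r ρ T fun y => mart hn r ρ c (sig hn r ρ k T y) y

/-- The stopped process is a martingale. -/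
lemma stepE_stoppedMart (hq : q ≠ 0) (k T : ℕ) :
    stepE q hn r ρ T (stoppedMart hn r ρ ((2 * q - 1) / q) k (T + 1)) =
      stoppedMart hn r ρ ((2 * q - 1) / q) k T := by
  unfold stoppedMart
  rw [stepE_cut]
  funext y
  unfold cut
  split_ifs with hg
  · beta_reduce
    have hag : ∀ z, ∀ s < T, Function.update y T z s = y s := fun z s hs => by simp [hs.ne]
    by_cases hh : Hit hn r ρ k T y
    · refine Eq.trans ?_ (stepE_const hn r ρ T y
        (mart hn r ρ ((2 * q - 1) / q) (sig hn r ρ k T y) y) (q := q))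
      refine stepE_congr hn r ρ T y fun z _ => ?_
      have hz : Hit hn r ρ k T (Function.update y T z) := by
        rwa [hit_depOn hn r ρ k T _ _ (hag z)]
      have hz' : Hit hn r ρ k (T + 1) (Function.update y T z) := by
        obtain ⟨s, hs, hm⟩ := hz; exact ⟨s, by omega, hm⟩
      have e1 : sig hn r ρ k (T + 1) (Function.update y T z) = tau n hn r ρ k y := by
        rw [sig, if_pos hz', tau_congr hn r ρ (hag z) hz]
      have e2 : sig hn r ρ k T y = tau n hn r ρ k y := by rw [sig, if_pos hh]
      rw [e1, e2]
      exact mart_depOn hn r ρ _ _ _ _ fun s hs => hag z s (hs.trans_le hh.tau_mem.2)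
    -- If the walk has not stopped by time `T`, then `sig` at `T + 1` is `T + 1` in both cases of
    -- its definition.
    · have e2 : sig hn r ρ k T y = T := by rw [sig, if_neg hh]
      rw [e2]
      refine Eq.trans ?_ (stepE_mart hn r ρ hq T y hg)
      refine stepE_congr hn r ρ T y fun z _ => ?_
      have e1 : sig hn r ρ k (T + 1) (Function.update y T z) = T + 1 := by
        unfold sig
        split_ifs with hz
        · obtain ⟨h1, h2⟩ := hz.tau_mem
          by_contra hne
          apply hh
          rw [← hit_depOn hn r ρ k T _ _ (hag z)]
          exact ⟨_, by omega, h1⟩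
        · rfl
      rw [e1]
  · rfl

lemma wt_abs_le (ζ : Config) (x : Z2) : |wt ζ x| ≤ |fH x| + |fV x| := by
  unfold wt
  split_ifs
  · linarith [abs_nonneg (fV x)]
  · linarith [abs_nonneg (fH x)]

/-- A bound for the stopped process. -/
noncomputable def martBound (n : ℕ) (r c : ℝ) (k : ℕ) : ℝ :=
  n * ∑ v ∈ ballFinset (r + 1), |alpha v| +
    |c| * ∑ v ∈ ballFinset (r + 1), (|fH v| + |fV v|) + k

lemma stoppedMart_abs_le (c : ℝ) (k T : ℕ) (y : Path) :
    |stoppedMart hn r ρ c k T y| ≤ martBound n r c k := by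
  unfold stoppedMart cut martBound
  split_ifs with hg
  · set s := sig hn r ρ k T y with hs
    have h1 : ∀ i, |alpha ((fseq n hn r ρ y s).1 i)| ≤ ∑ v ∈ ballFinset (r + 1), |alpha v| :=
      fun i => Finset.single_le_sum (f := fun v => |alpha v|) (fun _ _ => abs_nonneg _)
        ((mem_ballFinset _ _).2 (region_norm2 (hg s (sig_le hn r ρ k T y) i)))
    have h2 : |∑ i, alpha ((fseq n hn r ρ y s).1 i)| ≤
        n * ∑ v ∈ ballFinset (r + 1), |alpha v| := by
      refine (Finset.abs_sum_le_sum_abs _ _).trans ((Finset.sum_le_sum fun i _ => h1 i).trans ?_)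
      simp
    have h3 : |∑ v ∈ ballFinset (r + 1), wt (fseq n hn r ρ y s).2 v| ≤
        ∑ v ∈ ballFinset (r + 1), (|fH v| + |fV v|) :=
      (Finset.abs_sum_le_sum_abs _ _).trans (Finset.sum_le_sum fun v _ => wt_abs_le _ v)
    have h4 : |(ret hn r ρ s y : ℝ)| ≤ k := by
      rw [abs_of_nonneg (by positivity)]
      exact_mod_cast ret_sig_le hn r ρ k T y
    unfold mart
    refine (abs_sub _ _).trans (add_le_add ((abs_add_le _ _).trans (add_le_add h2 ?_)) h4)
    rw [abs_mul]
    exact mul_le_mul_of_nonneg_left h3 (abs_nonneg _)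
  · rw [abs_zero]; positivity

/-- Optional stopping at `tau`. -/
lemma integral_mart_tau (hr : 0 < r) {μ : Measure Path} [IsProbabilityMeasure μ]
    (hμ : IsFrozenLaw q n hn r ρ μ) (hq : q ∈ Set.Ioc (0 : ℝ) 1) (k : ℕ) :
    Integrable (fun y => mart hn r ρ ((2 * q - 1) / q) (tau n hn r ρ k y) y) μ ∧
    ∫ y, mart hn r ρ ((2 * q - 1) / q) (tau n hn r ρ k y) y ∂μ =
      n + (2 * q - 1) / q * ∑ v ∈ ballFinset (r + 1), wt ρ v := by
  set c := (2 * q - 1) / q with hc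
  have hdep : ∀ T, DepOn T (stoppedMart hn r ρ c k T) := fun T =>
    cut_depOn hn r ρ (stopped_depOn hn r ρ k (mart_depOn hn r ρ c) T)
  have hbd := stoppedMart_abs_le hn r ρ c k
  have h1 : ∀ T, ∫ y, stoppedMart hn r ρ c k T y ∂μ =
      n + c * ∑ v ∈ ballFinset (r + 1), wt ρ v := by
    intro T
    induction T with
    | zero =>
      have : ∀ y, stoppedMart hn r ρ c k 0 y = n + c * ∑ v ∈ ballFinset (r + 1), wt ρ v := by
        intro y
        have hs : sig hn r ρ k 0 y = 0 := Nat.le_zero.1 (sig_le hn r ρ k 0 y)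
        rw [stoppedMart, cut, if_pos]
        · rw [hs, mart, ret_zero]
          simp [fseq, alpha_zero]
        · intro s hs i
          obtain rfl : s = 0 := by omega
          exact zero_mem_region r hr
      simp [this]
    | succ T ih =>
      rw [integral_step hn r ρ hμ hq T (hdep _) (hbd _), hc, stepE_stoppedMart hn r ρ hq.1.ne',
        ← hc, ih]
  have hlim : ∀ᵐ y ∂μ, Tendsto (fun T => stoppedMart hn r ρ c k T y) atTop
      (nhds (mart hn r ρ c (tau n hn r ρ k y) y)) := by
    filter_upwards [ae_good hn r ρ hr hμ hq, ae_frozen hn r ρ hr hμ hq] with y hy hf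
    refine tendsto_const_nhds.congr' ?_
    filter_upwards [eventually_sig hn r ρ (k := k) hf] with T hT
    rw [stoppedMart, cut, if_pos (hy T), hT]
  have hmeas : ∀ T, AEStronglyMeasurable (stoppedMart hn r ρ c k T) μ := fun T =>
    (hdep T).measurable.aestronglyMeasurable
  constructor
  · refine Integrable.of_bound (aestronglyMeasurable_of_tendsto_ae atTop hmeas hlim)
      (martBound n r c k) ?_
    filter_upwards [hlim] with y hy
    exact le_of_tendsto hy.norm (Eventually.of_forall fun T => hbd T y)
  · have h2 := tendsto_integral_of_dominated_convergence (fun _ => martBound n r c k) hmeas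
      (integrable_const _) (fun T => Eventually.of_forall (hbd T)) hlim
    simp_rw [h1] at h2
    exact (tendsto_nhds_unique h2 tendsto_const_nhds)

/-- The stopped weights are bounded, and they are measurable as limits of the weights stopped
at `sig`. -/
lemma integrable_wt_tau (hr : 0 < r) {μ : Measure Path} [IsProbabilityMeasure μ]
    (hμ : IsFrozenLaw q n hn r ρ μ) (hq : q ∈ Set.Ioc (0 : ℝ) 1) (k : ℕ) (x : Z2) :
    Integrable (fun y => wt (fseq n hn r ρ y (tau n hn r ρ k y)).2 x) μ := by
  have hd : ∀ t, DepOn t fun y => wt (fseq n hn r ρ y t).2 x := fun t y y' h => by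
    simp only [fseq_congr hn r ρ h t le_rfl]
  refine Integrable.of_bound (aestronglyMeasurable_of_tendsto_ae atTop
    (f := fun T y => wt (fseq n hn r ρ y (sig hn r ρ k T y)).2 x)
    (fun T => (stopped_depOn hn r ρ k hd T).measurable.aestronglyMeasurable) ?_)
      (|fH x| + |fV x|) (Eventually.of_forall fun y => wt_abs_le _ x)
  filter_upwards [ae_frozen hn r ρ hr hμ hq] with y hf
  refine tendsto_const_nhds.congr' ?_
  filter_upwards [eventually_sig hn r ρ (k := k) hf] with T hT
  rw [hT]

/-- The return probability is the probability that `k` returns ever occur. -/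
lemma returnProb_eq (μ : Measure Path) [IsProbabilityMeasure μ] (k : ℕ) :
    MeasurableSet {y : Path | ∀ t, ret hn r ρ t y < k} ∧
      returnProb n hn r ρ μ k = 1 - μ.real {y : Path | ∀ t, ret hn r ρ t y < k} := by
  set E : ℕ → Set Path := fun t => {y : Path | k ≤ ret hn r ρ t y} with hE
  have hm : ∀ t, MeasurableSet (E t) := fun t =>
    (ret_depOn hn r ρ t).measurable (MeasurableSet.of_discrete (s := Set.Ici k))
  have hmono : Monotone E := fun s t hst y hy => le_trans hy (ret_mono hn r ρ y hst)
  have hF : {y : Path | ∀ t, ret hn r ρ t y < k} = (⋃ t, E t)ᶜ := by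
    ext y; simp [hE]
  have hU : MeasurableSet (⋃ t, E t) := MeasurableSet.iUnion hm
  rw [hF]
  refine ⟨hU.compl, ?_⟩
  rw [probReal_compl_eq_one_sub hU, sub_sub_cancel]
  have h := tendsto_measure_iUnion_atTop (μ := μ) hmono
  exact ((ENNReal.tendsto_toReal (measure_ne_top μ _)).comp h).limUnder_eq

end

end HV

/-! ### The lower bound -/

namespace HV

/-- The inequality behind the theorem: on the event that fewer than `k` returns occur, every
walker is frozen on `∂B_r` at time `tau`, where the potential kernel is at least
`(2/π) ln r`. -/
lemma measure_few_returns_le {q : ℝ} {n : ℕ} (hn : 0 < n) (r : ℝ) (ρ : Config) (hr : 0 < r)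
    {μ : Measure Path} [IsProbabilityMeasure μ] (hμ : IsFrozenLaw q n hn r ρ μ)
    (hq : q ∈ Set.Ioc (0 : ℝ) 1) (k : ℕ) :
    n * (2 / Real.pi * Real.log r) * μ.real {y : Path | ∀ t, ret hn r ρ t y < k} ≤
      n + k + (2 * q - 1) / q * ∑ v ∈ ballFinset (r + 1),
        (wt ρ v - ∫ y, wt (fseq n hn r ρ y (tau n hn r ρ k y)).2 v ∂μ) := by
  set F := {y : Path | ∀ t, ret hn r ρ t y < k} with hF
  set c := (2 * q - 1) / q with hc
  obtain ⟨hM, hMe⟩ := integral_mart_tau hn r ρ hr hμ hq k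
  rw [← hc] at hM hMe
  have hw := integrable_wt_tau hn r ρ hr hμ hq k
  have hS : Integrable (fun y => c * ∑ v ∈ ballFinset (r + 1),
      wt (fseq n hn r ρ y (tau n hn r ρ k y)).2 v) μ :=
    (integrable_finsetSum _ fun v _ => hw v).const_mul c
  have hFm := (returnProb_eq hn r ρ μ k).1
  have hle : ∀ᵐ y ∂μ, F.indicator (fun _ => n * (2 / Real.pi * Real.log r)) y ≤
      mart hn r ρ c (tau n hn r ρ k y) y - c * ∑ v ∈ ballFinset (r + 1),
        wt (fseq n hn r ρ y (tau n hn r ρ k y)).2 v + k := by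
    filter_upwards [ae_frozen hn r ρ hr hμ hq] with y ⟨t, ht⟩
    have hmem : tau n hn r ρ k y ∈ stopSet hn r ρ k y := Nat.sInf_mem ⟨t, Or.inr ht⟩
    have hret : (ret hn r ρ (tau n hn r ρ k y) y : ℝ) ≤ k := by
      exact_mod_cast ret_le_of_not_stop hn r ρ k y _ fun s hs => Nat.notMem_of_lt_sInf hs
    have ha : ∑ i, potKer ((fseq n hn r ρ y (tau n hn r ρ k y)).1 i) ≤
        ∑ i, alpha ((fseq n hn r ρ y (tau n hn r ρ k y)).1 i) :=
      Finset.sum_le_sum fun i _ => potKer_le_alpha _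
    have hmain : F.indicator (fun _ => n * (2 / Real.pi * Real.log r)) y ≤
        ∑ i, potKer ((fseq n hn r ρ y (tau n hn r ρ k y)).1 i) := by
      by_cases hy : y ∈ F
      · rw [Set.indicator_of_mem hy]
        have hb := hmem.resolve_left (hy _).ne
        have := Finset.sum_le_sum (s := Finset.univ) fun i _ =>
          log_le_potKer ((fseq n hn r ρ y (tau n hn r ρ k y)).1 i) r hr (not_lt.1 (hb i).1)
        simpa using this
      · rw [Set.indicator_of_notMem hy]
        exact Finset.sum_nonneg fun i _ => potKer_nonneg _
    unfold mart
    linarith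
  have hIe := integral_mono_ae ((integrable_const _).indicator hFm)
    ((hM.sub hS).add (integrable_const (k : ℝ))) hle
  rw [integral_indicator_const _ hFm, integral_add' (hM.sub hS) (integrable_const _),
    integral_sub' hM hS, hMe, integral_const_mul, integral_finsetSum _ fun v _ => hw v,
    smul_eq_mul, mul_comm] at hIe
  refine hIe.trans_eq ?_
  rw [Finset.sum_sub_distrib]
  simp
  ring

end HV

/-- **Lemma (martingale lower bound for the return probability).**
There is a constant `C > 0` such that, for every `q ∈ (0,1]`, `n ≥ 1`, `k ≥ 0`,
`r ≥ 2` and every initial label configuration `ρ`, the frozen `n`-walker `H`–`V` walk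
satisfies
`p_{k,r}(ρ) ≥ 1 − (π/(2 ln r))·( ((2q−1)/(nq)) Σ_{x ∈ B_{r+1}} (wt_{ζ₀}(x) −
E[wt_{ζ_{τ_{k,r}(ρ)}}(x)]) + k/n + C )`. -/
theorem hv_return_prob_lower_bound :
    ∃ C : ℝ, 0 < C ∧
      ∀ (q : ℝ), q ∈ Set.Ioc (0 : ℝ) 1 →
      ∀ (n : ℕ) (hn : 0 < n) (k : ℕ) (r : ℕ), 2 ≤ r →
      ∀ (ρ : HV.Config) (μr : MeasureTheory.Measure HV.Path),
        MeasureTheory.IsProbabilityMeasure μr →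
        HV.IsFrozenLaw q n hn (r : ℝ) ρ μr →
        1 - Real.pi / (2 * Real.log r) *
            ((2 * q - 1) / (n * q) *
                ∑ x ∈ HV.ballFinset ((r : ℝ) + 1),
                  (HV.wt ρ x -
                    ∫ y, HV.wt ((HV.fseq n hn (r : ℝ) ρ y
                      (HV.tau n hn (r : ℝ) ρ k y)).2) x ∂μr) +
              (k : ℝ) / n + C) ≤
          HV.returnProb n hn (r : ℝ) ρ μr k := by
  refine ⟨1, one_pos, fun q hq n hn k r hr ρ μ hμ hlaw => ?_⟩
  have hr0 : (0 : ℝ) < r := by positivity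
  have hlog : 0 < Real.log r := Real.log_pos (by exact_mod_cast hr)
  have hn0 : (0 : ℝ) < n := by exact_mod_cast hn
  have hpi := Real.pi_pos
  have h := HV.measure_few_returns_le hn r ρ hr0 hlaw hq k
  rw [(HV.returnProb_eq hn r ρ μ k).2]
  refine sub_le_sub_left ?_ 1
  rw [mul_comm, ← le_div_iff₀ (by positivity)] at h
  refine h.trans_eq ?_
  have := hq.1.ne'
  field_simp
  ring
end

section
/- There exists a constant C > 0 such that for every x ∈ ℤ² with x ≠ (0,0): |f_H(x) − cos(2 arg(x))/(2π|x|²)| ≤ C |x|^{−4} and |f_V(x) + cos(2 arg(x))/(2π|x|²)| ≤ C |x|^{−4}. -/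
/-!
The starting point is the Fourier formula `srw n x = (4π²)⁻¹ ∫ φ(p)ⁿ cos(x·p) dp` over the torus,
with `φ(p) = (cos p₁ + cos p₂)/2` (`srw_fourier`). Since `1 - cos(x·p) ≤ 4|x|²(1 - φ(p))`
(`one_sub_ph_le`), the geometric sums `∑ φⁱ (1 - cos(x·p))` are uniformly bounded, so dominated
convergence gives the limit defining the potential kernel (`tendsto_potKer`). Taking a second
difference turns this into
`f_H(x) = (4π²)⁻¹ ∫ cos(x·p) (1 - cos p₂) / (2 - cos p₁ - cos p₂) dp` (`fH_eq`). The corresponding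
integrand for `f_V` has `1 - cos p₁` instead, and the two add up to `cos(x·p)`, whose integral
vanishes for `x ≠ 0`; hence `f_V = -f_H` off the origin (`fV_eq_neg`). Also `f_V` is `f_H` with the
coordinates exchanged, so it is enough to treat `f_H` for `|x₂| ≤ |x₁|`.

In that case the `p₁`-integral is evaluated exactly by the Poisson-kernel formula
`∫ cos(nθ) / (cosh s - cos θ) dθ = 2π e^{-ns} / sinh s` (`poisson_integral`) with
`cosh s = 2 - cos t`, i.e. `s = 2 arsinh (sin (t/2))`. This gives, with `N = |x₁|`,
`f_H(x) = π⁻¹ ∫₀^π cos(x₂ t) w(t) e^{-N s(t)} dt`, where `w(t) = t/2 + O(t³)` and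
`s(t) = t + O(t³)` (`fH_eq_line`). Replacing `w` and `s` by their leading terms costs
`∫ (t³ + N t⁴) e^{-Nt/4} dt = O(N⁻⁴)`, and what remains is the Laplace integral
`∫₀^∞ cos(bt) t e^{-Nt} dt = (N² - b²)/(N² + b²)²` (`integral_main`), which is the leading term
`cos(2 arg x)/|x|²`.
-/


open Filter
open scoped ENNReal

/-! ### Fourier representation of the potential kernel and its second differences -/

namespace HV
open MeasureTheory Real Set Topology

/-- Lebesgue measure on the half-open period `(-π, π]`. -/
noncomputable def circ : Measure ℝ := volume.restrict (Ioc (-π) π)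

instance : IsFiniteMeasure circ := by unfold circ; infer_instance

/-- Lebesgue measure on the square `(-π, π]²`, of total mass `4π²`. -/
noncomputable def torus : Measure (ℝ × ℝ) := circ.prod circ

instance : IsFiniteMeasure torus := by unfold torus; infer_instance

/-- The characteristic function of one step of the walk. -/
noncomputable def phi (p : ℝ × ℝ) : ℝ := (cos p.1 + cos p.2) / 2

/-- The (real part of the) character `p ↦ cos(x·p)` attached to the lattice point `x`. -/
noncomputable def ph (x : Z2) (p : ℝ × ℝ) : ℝ := cos (x.1 * p.1 + x.2 * p.2)

lemma continuous_phi : Continuous phi := by unfold phi; fun_prop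

lemma continuous_ph (x : Z2) : Continuous (ph x) := by unfold ph; fun_prop

lemma abs_phi_le (p : ℝ × ℝ) : |phi p| ≤ 1 := by
  unfold phi
  rw [abs_le]
  constructor <;> linarith [neg_one_le_cos p.1, neg_one_le_cos p.2, cos_le_one p.1, cos_le_one p.2]

lemma abs_ph_le (x : Z2) (p : ℝ × ℝ) : |ph x p| ≤ 1 := abs_cos_le_one _

lemma integrable_of_bdd {f : ℝ × ℝ → ℝ} (hf : Measurable f) (C : ℝ) (hC : ∀ p, |f p| ≤ C) :
    Integrable f torus :=
  Integrable.of_bound hf.aestronglyMeasurable C (Filter.Eventually.of_forall hC)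

lemma integrable_pow_ph (n : ℕ) (x : Z2) : Integrable (fun p => phi p ^ n * ph x p) torus := by
  refine integrable_of_bdd
    (((continuous_phi.pow n).mul (continuous_ph x)).measurable) 1 fun p => ?_
  rw [abs_mul, abs_pow]
  exact mul_le_one₀ (pow_le_one₀ (abs_nonneg _) (abs_phi_le p)) (abs_nonneg _) (abs_ph_le x p)

lemma integral_circ (f : ℝ → ℝ) : ∫ t, f t ∂circ = ∫ t in (-π)..π, f t := by
  rw [intervalIntegral.integral_of_le (by linarith [pi_pos])]; rfl

lemma integral_cos_circ (k : ℤ) : ∫ t, cos (k * t) ∂circ = if k = 0 then 2 * π else 0 := by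
  rw [integral_circ]
  split_ifs with h
  · subst h; simp; ring
  · rw [intervalIntegral.integral_comp_mul_left _ (by exact_mod_cast h)]
    simp [sin_int_mul_pi]

lemma integral_circ_odd (f : ℝ → ℝ) (hf : ∀ t, f (-t) = - f t) : ∫ t, f t ∂circ = 0 := by
  rw [integral_circ]
  have := intervalIntegral.integral_comp_neg (a := -π) (b := π) f
  simp only [hf, intervalIntegral.integral_neg, neg_neg] at this
  linarith

lemma integral_ph (x : Z2) : ∫ p, ph x p ∂torus = if x = (0, 0) then 4 * π ^ 2 else 0 := by
  have h1 : Integrable (fun p : ℝ × ℝ => cos (x.1 * p.1) * cos (x.2 * p.2)) torus :=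
    integrable_of_bdd (by fun_prop) 1 fun p => by
      rw [abs_mul]
      exact mul_le_one₀ (abs_cos_le_one _) (abs_nonneg _) (abs_cos_le_one _)
  have h2 : Integrable (fun p : ℝ × ℝ => sin (x.1 * p.1) * sin (x.2 * p.2)) torus :=
    integrable_of_bdd (by fun_prop) 1 fun p => by
      rw [abs_mul]
      exact mul_le_one₀ (abs_sin_le_one _) (abs_nonneg _) (abs_sin_le_one _)
  simp only [ph, cos_add]
  rw [integral_sub h1 h2, torus,
    integral_prod_mul (fun t : ℝ => cos (x.1 * t)) (fun t : ℝ => cos (x.2 * t)),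
    integral_prod_mul (fun t : ℝ => sin (x.1 * t)) (fun t : ℝ => sin (x.2 * t)),
    integral_cos_circ, integral_cos_circ,
    integral_circ_odd (fun t : ℝ => sin (x.1 * t)) (by intro t; simp)]
  obtain ⟨a, b⟩ := x
  by_cases ha : a = 0 <;> by_cases hb : b = 0 <;> simp [ha, hb]
  ring

lemma srw_fourier (n : ℕ) : ∀ x : Z2,
    srw n x = (1 / (4 * π ^ 2)) * ∫ p, phi p ^ n * ph x p ∂torus := by
  induction n with
  | zero =>
    intro x
    simp only [srw, pow_zero, one_mul, integral_ph]
    split_ifs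
    · field_simp
    · simp
  | succ n ih =>
    intro x
    have i := integrable_pow_ph n
    simp only [srw, ih]
    have i2 (y z : Z2) : Integrable (fun p => phi p ^ n * ph y p + phi p ^ n * ph z p) torus :=
      (i y).add (i z)
    rw [← mul_add, ← mul_add, ← mul_add, mul_div_assoc, add_assoc (∫ p, _ ∂torus + ∫ p, _ ∂torus),
      ← integral_add (i _) (i _), ← integral_add (i _) (i _),
      ← integral_add (i2 _ _) (i2 _ _), ← integral_div]
    congr 2
    ext p
    have e1 : ph (x + (1, 0)) p + ph (x - (1, 0)) p = 2 * cos p.1 * ph x p := by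
      simp only [ph, Prod.fst_add, Prod.snd_add, Prod.fst_sub, Prod.snd_sub]
      push_cast
      rw [show ((x.1 : ℝ) + 1) * p.1 + (x.2 + 0) * p.2 = (x.1 * p.1 + x.2 * p.2) + p.1 by ring,
        show ((x.1 : ℝ) - 1) * p.1 + (x.2 - 0) * p.2 = (x.1 * p.1 + x.2 * p.2) - p.1 by ring,
        cos_add, cos_sub]
      ring
    have e2 : ph (x + (0, 1)) p + ph (x - (0, 1)) p = 2 * cos p.2 * ph x p := by
      simp only [ph, Prod.fst_add, Prod.snd_add, Prod.fst_sub, Prod.snd_sub]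
      push_cast
      rw [show ((x.1 : ℝ) + 0) * p.1 + (x.2 + 1) * p.2 = (x.1 * p.1 + x.2 * p.2) + p.2 by ring,
        show ((x.1 : ℝ) - 0) * p.1 + (x.2 - 1) * p.2 = (x.1 * p.1 + x.2 * p.2) - p.2 by ring,
        cos_add, cos_sub]
      ring
    simp only [pow_succ]
    have e3 : phi p = (cos p.1 + cos p.2) / 2 := rfl
    linear_combination (phi p ^ n / 4) * e1 + (phi p ^ n / 4) * e2 - phi p ^ n * ph x p * e3

lemma abs_sin_int_mul_le (k : ℤ) (t : ℝ) : |sin (k * t)| ≤ |(k : ℝ)| * |sin t| := by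
  have nat (n : ℕ) : |sin (n * t)| ≤ n * |sin t| := by
    induction n with
    | zero => simp
    | succ n ih =>
      push_cast
      rw [add_mul, one_mul, sin_add, add_mul, one_mul]
      refine (abs_add_le _ _).trans (add_le_add ?_ ?_) <;> rw [abs_mul]
      · exact (mul_le_of_le_one_right (abs_nonneg _) (abs_cos_le_one _)).trans ih
      · exact mul_le_of_le_one_left (abs_nonneg _) (abs_cos_le_one _)
  obtain ⟨n, rfl | rfl⟩ := k.eq_nat_or_neg
  · simpa using nat n
  · simpa using nat n

/-- The numerator of the potential-kernel integrand is controlled by its denominator. With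
`1 - cos u = 2 sin²(u/2)` this is a consequence of `|sin(kt)| ≤ |k| |sin t|`, so it holds for all
`p`, not only on one period. -/
lemma one_sub_ph_le (x : Z2) (p : ℝ × ℝ) :
    1 - ph x p ≤ 4 * ((x.1 : ℝ) ^ 2 + (x.2 : ℝ) ^ 2) * (1 - phi p) := by
  have hs (t : ℝ) : 1 - cos t = 2 * sin (t / 2) ^ 2 := by
    rw [sin_sq, cos_sq (t / 2)]; ring_nf
  have h1 : 1 - phi p = sin (p.1 / 2) ^ 2 + sin (p.2 / 2) ^ 2 := by
    unfold phi; linarith [hs p.1, hs p.2]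
  rw [ph, hs, h1]
  have h2 : |sin ((x.1 * p.1 + x.2 * p.2) / 2)|
      ≤ |(x.1 : ℝ)| * |sin (p.1 / 2)| + |(x.2 : ℝ)| * |sin (p.2 / 2)| := by
    rw [show (x.1 * p.1 + x.2 * p.2) / 2 = x.1 * (p.1 / 2) + x.2 * (p.2 / 2) by ring, sin_add]
    refine (abs_add_le _ _).trans (add_le_add ?_ ?_) <;> rw [abs_mul]
    · exact (mul_le_of_le_one_right (abs_nonneg _) (abs_cos_le_one _)).trans
        (abs_sin_int_mul_le _ _)
    · exact (mul_le_of_le_one_left (abs_nonneg _) (abs_cos_le_one _)).trans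
        (abs_sin_int_mul_le _ _)
  rw [← sq_abs (sin ((x.1 * p.1 + x.2 * p.2) / 2)), ← sq_abs (sin (p.1 / 2)),
    ← sq_abs (sin (p.2 / 2)), ← sq_abs (x.1 : ℝ), ← sq_abs (x.2 : ℝ)]
  have h3 := pow_le_pow_left₀ (abs_nonneg _) h2 2
  generalize |sin (p.1 / 2)| = a at *
  generalize |sin (p.2 / 2)| = b at *
  generalize |(x.1 : ℝ)| = c at *
  generalize |(x.2 : ℝ)| = d at *
  nlinarith [sq_nonneg (c * a - d * b), sq_nonneg (c * b), sq_nonneg (d * a)]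

lemma cos_ne_one_circ : ∀ᵐ t ∂circ, cos t ≠ 1 := by
  have h0 : ∀ᵐ t ∂circ, t ≠ 0 := ae_restrict_of_ae (Measure.ae_ne volume 0)
  have h1 : ∀ᵐ t ∂circ, t ∈ Ioc (-π) π := ae_restrict_mem measurableSet_Ioc
  filter_upwards [h0, h1] with t ht0 ht1 hc
  exact ht0 ((cos_eq_one_iff_of_lt_of_lt (by linarith [ht1.1, pi_pos])
    (by linarith [ht1.2, pi_pos])).1 hc)

lemma cos_ne_neg_one_circ : ∀ᵐ t ∂circ, cos t ≠ -1 := by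
  have h0 : ∀ᵐ t ∂circ, t ≠ π := ae_restrict_of_ae (Measure.ae_ne volume π)
  have h1 : ∀ᵐ t ∂circ, t ∈ Ioc (-π) π := ae_restrict_mem measurableSet_Ioc
  filter_upwards [h0, h1] with t ht0 ht1 hc
  have h2 : cos (t - π) = 1 := by rw [cos_sub_pi, hc, neg_neg]
  rw [cos_eq_one_iff_of_lt_of_lt (by linarith [ht1.1, pi_pos]) (by linarith [ht1.2, pi_pos])] at h2
  exact ht0 (by linarith)

lemma phi_ne_neg_one : ∀ᵐ p ∂torus, phi p ≠ -1 := by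
  filter_upwards [(Measure.quasiMeasurePreserving_fst (μ := circ) (ν := circ)).ae
    cos_ne_neg_one_circ] with p hp hphi
  apply hp
  unfold phi at hphi
  linarith [neg_one_le_cos p.1, neg_one_le_cos p.2]

/-- The integrand `(1 - cos(x·p))/(1 - φ(p))` of the Fourier formula for the potential kernel.
At the zeros of the denominator the numerator vanishes as well, and the quotient is `0`. -/
noncomputable def ker (x : Z2) (p : ℝ × ℝ) : ℝ := (1 - ph x p) / (1 - phi p)

lemma ph_eq_one {x : Z2} {p : ℝ × ℝ} (h : phi p = 1) : ph x p = 1 := by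
  have := one_sub_ph_le x p
  rw [h] at this
  linarith [(abs_le.1 (abs_ph_le x p)).2]

lemma abs_ker_le (x : Z2) (p : ℝ × ℝ) : |ker x p| ≤ 4 * ((x.1 : ℝ) ^ 2 + (x.2 : ℝ) ^ 2) := by
  unfold ker
  have h1 := (abs_le.1 (abs_ph_le x p)).2
  have h2 := (abs_le.1 (abs_phi_le p)).2
  rw [abs_of_nonneg (div_nonneg (by linarith) (by linarith))]
  exact div_le_of_le_mul₀ (by linarith) (by positivity) (one_sub_ph_le x p)

lemma integrable_ker (x : Z2) : Integrable (ker x) torus :=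
  integrable_of_bdd ((measurable_const.sub (continuous_ph x).measurable).div
    (measurable_const.sub continuous_phi.measurable)) _ (abs_ker_le x)

/-- The partial sums of the potential kernel on the Fourier side, summed as a geometric series. -/
lemma sum_eq (x : Z2) (m : ℕ) (p : ℝ × ℝ) :
    ∑ i ∈ Finset.range m, (phi p ^ i * ph (0, 0) p - phi p ^ i * ph x p)
      = ker x p * (1 - phi p ^ m) := by
  have h0 : ph (0, 0) p = 1 := by simp [ph]
  simp only [h0, ← mul_sub]
  rw [← Finset.sum_mul]
  by_cases h : phi p = 1
  · simp [ker, ph_eq_one h]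
  · have h' : 1 - phi p ≠ 0 := fun e => h (by linarith)
    have := mul_neg_geom_sum (phi p) m
    rw [ker, ← this]
    field_simp

/-- The sequence in the definition of `potKer` converges, so that `potKer` is a genuine limit. -/
lemma tendsto_potKer (x : Z2) :
    Filter.Tendsto (fun m : ℕ => ∑ i ∈ Finset.range m, (srw i (0, 0) - srw i x)) Filter.atTop
      (𝓝 ((1 / (4 * π ^ 2)) * ∫ p, ker x p ∂torus)) := by
  have e (m : ℕ) : ∑ i ∈ Finset.range m, (srw i (0, 0) - srw i x)
      = (1 / (4 * π ^ 2)) * ∫ p, ker x p * (1 - phi p ^ m) ∂torus := by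
    have h (i : ℕ) : Integrable (fun p => phi p ^ i * ph (0, 0) p - phi p ^ i * ph x p) torus :=
      (integrable_pow_ph i _).sub (integrable_pow_ph i _)
    simp only [← sum_eq]
    rw [integral_finsetSum _ fun i _ => h i, Finset.mul_sum]
    refine Finset.sum_congr rfl fun i _ => ?_
    rw [integral_sub (integrable_pow_ph i _) (integrable_pow_ph i _), srw_fourier, srw_fourier,
      mul_sub]
  simp only [e]
  refine Filter.Tendsto.const_mul _ ?_
  refine tendsto_integral_of_dominated_convergence
    (fun _ => 4 * ((x.1 : ℝ) ^ 2 + (x.2 : ℝ) ^ 2) * 2) (fun m => ?_) (integrable_const _)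
    (fun m => Filter.Eventually.of_forall fun p => ?_) ?_
  · exact ((integrable_ker x).aestronglyMeasurable).mul
      ((continuous_const.sub (continuous_phi.pow m)).aestronglyMeasurable)
  · rw [norm_mul]
    refine mul_le_mul (abs_ker_le x p) ?_ (norm_nonneg _) (by positivity)
    have := pow_le_one₀ (n := m) (abs_nonneg _) (abs_phi_le p)
    rw [← abs_pow, abs_le] at this
    rw [norm_eq_abs, abs_le]
    constructor <;> linarith
  · filter_upwards [phi_ne_neg_one] with p hp
    by_cases h : phi p = 1
    · simp [ker, ph_eq_one h]
    · have : |phi p| < 1 := by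
        have := abs_le.1 (abs_phi_le p)
        exact abs_lt.2 ⟨lt_of_le_of_ne this.1 (Ne.symm hp), lt_of_le_of_ne this.2 h⟩
      have := tendsto_pow_atTop_nhds_zero_of_abs_lt_one this
      simpa using (this.const_sub 1).const_mul (ker x p)

lemma potKer_eq (x : Z2) : potKer x = (1 / (4 * π ^ 2)) * ∫ p, ker x p ∂torus :=
  (tendsto_potKer x).limUnder_eq

lemma fH_eq (x : Z2) : fH x = (1 / (4 * π ^ 2)) *
    ∫ p, ph x p * (1 - cos p.2) / (2 - cos p.1 - cos p.2) ∂torus := by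
  have i := integrable_ker
  have i2 (y z : Z2) : Integrable (fun p => ker y p + ker z p) torus := (i y).add (i z)
  rw [fH, potKer_eq, potKer_eq, potKer_eq, ← mul_add, mul_left_comm, ← mul_sub, mul_div_assoc,
    ← integral_add (i _) (i _), ← integral_const_mul,
    ← integral_sub (i2 _ _) ((i _).const_mul _), ← integral_div]
  congr 2
  ext p
  have e2 : ph (x + (0, 1)) p + ph (x - (0, 1)) p = 2 * cos p.2 * ph x p := by
    simp only [ph, Prod.fst_add, Prod.snd_add, Prod.fst_sub, Prod.snd_sub]
    push_cast
    rw [show ((x.1 : ℝ) + 0) * p.1 + (x.2 + 1) * p.2 = (x.1 * p.1 + x.2 * p.2) + p.2 by ring,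
      show ((x.1 : ℝ) - 0) * p.1 + (x.2 - 1) * p.2 = (x.1 * p.1 + x.2 * p.2) - p.2 by ring,
      cos_add, cos_sub]
    ring
  have e3 : 1 - phi p = (2 - cos p.1 - cos p.2) / 2 := by unfold phi; ring
  simp only [ker, e3]
  rw [← add_div, ← mul_div_assoc, ← sub_div,
    show 1 - ph (x + (0, 1)) p + (1 - ph (x - (0, 1)) p) - 2 * (1 - ph x p)
      = 2 * (ph x p * (1 - cos p.2)) by linear_combination -e2]
  rw [div_div_eq_mul_div, div_div, mul_comm (2 - _ - _) 4, ← div_div]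
  congr 1
  ring

lemma srw_swap (n : ℕ) : ∀ x : Z2, srw n x.swap = srw n x := by
  induction n with
  | zero => rintro ⟨a, b⟩; simp [srw, and_comm]
  | succ n ih =>
    rintro ⟨a, b⟩
    have h1 := ih (a + 1, b)
    have h2 := ih (a - 1, b)
    have h3 := ih (a, b + 1)
    have h4 := ih (a, b - 1)
    simp only [Prod.swap_prod_mk] at h1 h2 h3 h4
    simp [srw, h1, h2, h3, h4]
    ring

lemma potKer_swap_s13 (x : Z2) : potKer x.swap = potKer x := by
  simp only [potKer, srw_swap]

lemma fV_eq_swap (x : Z2) : fV x = fH x.swap := by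
  obtain ⟨a, b⟩ := x
  have h1 := potKer_swap_s13 (a + 1, b)
  have h2 := potKer_swap_s13 (a - 1, b)
  have h3 := potKer_swap_s13 (a, b)
  simp only [Prod.swap_prod_mk] at h1 h2 h3
  simp [fV, fH, h1, h2, h3]

lemma measurable_integrand (x : Z2) :
    Measurable fun p : ℝ × ℝ => ph x p * (1 - cos p.2) / (2 - cos p.1 - cos p.2) := by
  unfold ph; fun_prop

lemma abs_integrand_le (x : Z2) (p : ℝ × ℝ) :
    |ph x p * (1 - cos p.2) / (2 - cos p.1 - cos p.2)| ≤ 1 := by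
  have h1 := cos_le_one p.1
  have h2 := cos_le_one p.2
  rw [mul_div_assoc, abs_mul]
  refine mul_le_one₀ (abs_ph_le x p) (abs_nonneg _) ?_
  rw [abs_of_nonneg (div_nonneg (by linarith) (by linarith))]
  exact div_le_one_of_le₀ (by linarith) (by linarith)

lemma integrable_integrand (x : Z2) :
    Integrable (fun p : ℝ × ℝ => ph x p * (1 - cos p.2) / (2 - cos p.1 - cos p.2)) torus :=
  integrable_of_bdd (measurable_integrand x) 1 (abs_integrand_le x)

/-- The potential kernel is harmonic off the origin. -/
lemma fV_eq_neg (x : Z2) (hx : x ≠ (0, 0)) : fV x = -fH x := by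
  have h : fV x = (1 / (4 * π ^ 2)) *
      ∫ p, ph x p * (1 - cos p.1) / (2 - cos p.1 - cos p.2) ∂torus := by
    rw [fV_eq_swap, fH_eq, torus, ← integral_prod_swap]
    congr 2
    ext p
    simp only [ph, Prod.fst_swap, Prod.snd_swap]
    ring_nf
  have i : Integrable (fun p : ℝ × ℝ => ph x p * (1 - cos p.1) / (2 - cos p.1 - cos p.2)) torus := by
    refine integrable_of_bdd (by unfold ph; fun_prop) 1 fun p => ?_
    have h1 := cos_le_one p.1
    have h2 := cos_le_one p.2
    rw [mul_div_assoc, abs_mul]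
    refine mul_le_one₀ (abs_ph_le x p) (abs_nonneg _) ?_
    rw [abs_of_nonneg (div_nonneg (by linarith) (by linarith))]
    exact div_le_one_of_le₀ (by linarith) (by linarith)
  have hsum : fV x + fH x = (1 / (4 * π ^ 2)) * ∫ p, ph x p ∂torus := by
    rw [h, fH_eq, ← mul_add, ← integral_add i (integrable_integrand x)]
    congr 1
    refine integral_congr_ae ?_
    filter_upwards [(Measure.quasiMeasurePreserving_fst (μ := circ) (ν := circ)).ae
      cos_ne_one_circ] with p hp
    have h1 := lt_of_le_of_ne (cos_le_one p.1) hp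
    have h2 := cos_le_one p.2
    have : 2 - cos p.1 - cos p.2 ≠ 0 := by linarith
    rw [← add_div, div_eq_iff this]
    ring
  rw [integral_ph, if_neg hx] at hsum
  linarith

/-! ### Reduction to a one-dimensional integral -/

lemma integrable_poisson {s : ℝ} (hs : 0 < s) {f : ℝ → ℝ} (hf : Measurable f)
    (hb : ∀ t, |f t| ≤ 1) : Integrable (fun t => f t / (cosh s - cos t)) circ := by
  refine Integrable.of_bound (hf.div (by fun_prop)).aestronglyMeasurable (1 / (cosh s - 1))
    (Filter.Eventually.of_forall fun t => ?_)
  have h1 := one_lt_cosh.2 hs.ne'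
  have h2 := cos_le_one t
  rw [norm_div, norm_eq_abs, norm_eq_abs, abs_of_pos (show 0 < cosh s - cos t by linarith)]
  exact div_le_div₀ zero_le_one (hb t) (by linarith) (by linarith)

lemma poisson_recursion {s : ℝ} (hs : 0 < s) (n : ℕ) :
    ∫ t, cos ((n + 2 : ℕ) * t) / (cosh s - cos t) ∂circ + ∫ t, cos (n * t) / (cosh s - cos t) ∂circ
      = 2 * cosh s * ∫ t, cos ((n + 1 : ℕ) * t) / (cosh s - cos t) ∂circ := by
  have i (n : ℕ) : Integrable (fun t => cos (n * t) / (cosh s - cos t)) circ :=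
    integrable_poisson hs (by fun_prop) fun t => abs_cos_le_one _
  have h0 : ∫ t, cos ((n + 1 : ℕ) * t) ∂circ = 0 := by
    have := integral_cos_circ (n + 1 : ℕ)
    rw [if_neg (by positivity)] at this
    exact_mod_cast this
  have hj : ∫ t, 2 * cos ((n + 1 : ℕ) * t) ∂circ = 0 := by
    rw [integral_const_mul, h0, mul_zero]
  have j : Integrable (fun t : ℝ => 2 * cos ((n + 1 : ℕ) * t)) circ := by
    refine Integrable.const_mul (Integrable.of_bound (by fun_prop) 1
      (Filter.Eventually.of_forall fun t => abs_cos_le_one _)) _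
  rw [← integral_add (i _) (i _), ← sub_zero (2 * cosh s * _), ← hj,
    ← integral_const_mul, ← integral_sub ((i _).const_mul _) j]
  congr 1
  ext t
  have hc : cosh s - cos t ≠ 0 := by
    have h1 := one_lt_cosh.2 hs.ne'
    have h2 := cos_le_one t
    linarith
  have e : cos ((n + 2 : ℕ) * t) + cos (n * t) = 2 * cos t * cos ((n + 1 : ℕ) * t) := by
    rw [show ((n + 2 : ℕ) : ℝ) * t = (n + 1 : ℕ) * t + t by push_cast; ring,
      show (n : ℝ) * t = (n + 1 : ℕ) * t - t by push_cast; ring, cos_add, cos_sub]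
    ring
  rw [← add_div, e]
  field_simp
  ring

/-- The Fourier coefficients of `1/(cosh s - cos θ)`. By `poisson_recursion` they solve a linear
recursion with characteristic roots `e^{-s}` and `e^{s}`; as they are bounded, only the decaying
solution occurs. -/
lemma poisson_integral {s : ℝ} (hs : 0 < s) (n : ℕ) :
    (∫ t, cos (n * t) / (cosh s - cos t) ∂circ) * sinh s = 2 * π * exp (-(n * s)) := by
  set J : ℕ → ℝ := fun n => ∫ t, cos (n * t) / (cosh s - cos t) ∂circ with hJ
  have i (n : ℕ) : Integrable (fun t => cos (n * t) / (cosh s - cos t)) circ :=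
    integrable_poisson hs (by fun_prop) fun t => abs_cos_le_one _
  have hrec (n : ℕ) : J (n + 2) + J n = 2 * cosh s * J (n + 1) := poisson_recursion hs n
  have h1c := one_lt_cosh.2 hs.ne'
  obtain ⟨B, hB⟩ : ∃ B, ∀ n, |J n| ≤ B := by
    refine ⟨1 / (cosh s - 1) * circ.real univ, fun n => norm_integral_le_of_norm_le_const
      (f := fun t => cos (n * t) / (cosh s - cos t)) (Filter.Eventually.of_forall fun t => ?_)⟩
    have h2 := cos_le_one t
    rw [norm_div, norm_eq_abs, norm_eq_abs, abs_of_pos (show 0 < cosh s - cos t by linarith)]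
    exact div_le_div₀ zero_le_one (abs_cos_le_one _) (by linarith) (by linarith)
  have hcosh : 2 * cosh s = exp s + exp (-s) := by rw [cosh_eq]; ring
  have hee : exp s * exp (-s) = 1 := by rw [← exp_add]; simp
  have hD (n : ℕ) : J (n + 1) - exp (-s) * J n = exp s ^ n * (J 1 - exp (-s) * J 0) := by
    induction n with
    | zero => simp
    | succ n ih =>
      rw [pow_succ, mul_right_comm, ← ih]
      have := hrec n
      rw [hcosh] at this
      linear_combination this + J n * hee
  -- the component along the growing root `e^s` must vanish, because `J` is bounded
  have hD0 : J 1 - exp (-s) * J 0 = 0 := by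
    by_contra hne
    have hpos := abs_pos.2 hne
    have hle (n : ℕ) : exp s ^ n ≤ (B + exp (-s) * B) / |J 1 - exp (-s) * J 0| := by
      rw [le_div_iff₀ hpos, ← abs_of_pos (pow_pos (exp_pos s) n), ← abs_mul, ← hD]
      refine (abs_sub _ _).trans (add_le_add (hB _) ?_)
      rw [abs_mul, abs_of_pos (exp_pos _)]
      exact mul_le_mul_of_nonneg_left (hB _) (exp_pos _).le
    obtain ⟨n, hn⟩ := pow_unbounded_of_one_lt
      ((B + exp (-s) * B) / |J 1 - exp (-s) * J 0|) (one_lt_exp_iff.2 hs)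
    exact absurd (hle n) (not_le.2 hn)
  have hgeo (n : ℕ) : J n = exp (-(n * s)) * J 0 := by
    induction n with
    | zero => simp
    | succ n ih =>
      have h := hD n
      rw [hD0, mul_zero, ih] at h
      push_cast
      rw [show -(((n : ℝ) + 1) * s) = -s + -(n * s) by ring, exp_add]
      linarith
  have hJ1 : J 1 = cosh s * J 0 - 2 * π := by
    have h1 : ∫ t, (1 : ℝ) ∂circ = 2 * π := by
      rw [integral_circ]; simp; ring
    rw [← h1, hJ]
    dsimp only
    rw [← integral_const_mul, ← integral_sub ((i 0).const_mul _) (integrable_const _)]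
    congr 1
    ext t
    have h2 := cos_le_one t
    have hc : cosh s - cos t ≠ 0 := by linarith
    simp only [Nat.cast_one, one_mul, Nat.cast_zero, zero_mul, cos_zero]
    field_simp
    ring
  have hJ0 : J 0 * sinh s = 2 * π := by
    rw [sinh_eq]
    have : cosh s = (exp s + exp (-s)) / 2 := cosh_eq s
    rw [hJ1, this] at hD0
    linarith
  change J n * sinh s = _
  rw [hgeo, mul_assoc, hJ0]
  ring

/-- The amplitude `(1 - cos t)/sinh s(t)`, for `0 ≤ t ≤ π`, in the one-dimensional representation
of `f_H`. -/
noncomputable def wgt (t : ℝ) : ℝ := sin (t / 2) / √(1 + sin (t / 2) ^ 2)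

/-- The decay rate `s(t)`, the nonnegative solution of `cosh s = 2 - cos t` when `0 ≤ t ≤ π`. -/
noncomputable def decay (t : ℝ) : ℝ := 2 * arsinh (sin (t / 2))

/-- The integrand of the one-dimensional representation without its oscillating factor, extended by
zero to `t > π`. -/
noncomputable def dens (N t : ℝ) : ℝ := if t ≤ π then wgt t * exp (-(N * decay t)) else 0

/-- The integral over the first torus variable. The absolute values reduce all signs of `t` and of
`x.1` to the nonnegative case. -/
lemma inner_integral (x : Z2) {t : ℝ} (ht0 : 0 < |t|) (htpi : |t| ≤ π) :
    ∫ θ, ph x (θ, t) * (1 - cos t) / (2 - cos θ - cos t) ∂circ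
      = 2 * π * (cos (x.2 * |t|) * dens |(x.1 : ℝ)| |t|) := by
  have hσ : 0 < sin (|t| / 2) := sin_pos_of_pos_of_lt_pi (by linarith) (by linarith [pi_pos])
  set σ := sin (|t| / 2) with hσdef
  have hcos : 1 - cos t = 2 * σ ^ 2 := by
    rw [← cos_abs, hσdef, sin_sq, cos_sq (|t| / 2)]; ring_nf
  have hs : 0 < decay |t| := mul_pos two_pos (arsinh_pos_iff.2 hσ)
  have hcosh : cosh (decay |t|) = 2 - cos t := by
    rw [decay, cosh_two_mul, cosh_arsinh, sinh_arsinh, sq_sqrt (by positivity)]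
    linarith
  have hsinh : sinh (decay |t|) = 2 * σ * √(1 + σ ^ 2) := by
    rw [decay, sinh_two_mul, cosh_arsinh, sinh_arsinh]
  have hp := poisson_integral hs x.1.natAbs
  have hodd := integral_circ_odd (fun θ => sin (x.1 * θ) / (cosh (decay |t|) - cos θ))
    (by intro θ; simp [neg_div])
  have hcosabs (θ : ℝ) : cos (x.1.natAbs * θ) = cos (x.1 * θ) := by
    rw [Nat.cast_natAbs, Int.cast_abs, ← cos_abs, abs_mul, abs_abs, ← abs_mul, cos_abs]
  simp only [hcosabs] at hp
  rw [Nat.cast_natAbs, Int.cast_abs] at hp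
  have hfun (θ : ℝ) : ph x (θ, t) * (1 - cos t) / (2 - cos θ - cos t)
      = cos (x.2 * t) * (1 - cos t) * (cos (x.1 * θ) / (cosh (decay |t|) - cos θ))
        - sin (x.2 * t) * (1 - cos t) * (sin (x.1 * θ) / (cosh (decay |t|) - cos θ)) := by
    rw [hcosh, ph, cos_add, show 2 - cos θ - cos t = 2 - cos t - cos θ by ring]
    ring
  simp only [hfun]
  rw [integral_sub, integral_const_mul, integral_const_mul, hodd, mul_zero, sub_zero]
  · have hc2 : cos (x.2 * |t|) = cos (x.2 * t) := by
      rw [← cos_abs, abs_mul, abs_abs, ← abs_mul, cos_abs]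
    rw [hsinh, ← eq_div_iff (by positivity)] at hp
    rw [hp, hcos, hc2, dens, if_pos htpi, wgt, ← hσdef]
    field_simp
  · exact (integrable_poisson hs (by fun_prop) fun t => abs_cos_le_one _).const_mul _
  · exact (integrable_poisson hs (by fun_prop) fun t => abs_sin_le_one _).const_mul _

lemma fH_eq_line (x : Z2) :
    fH x = (1 / π) * ∫ t in Ioi 0, cos (x.2 * t) * dens |(x.1 : ℝ)| t := by
  rw [fH_eq, torus, integral_prod_symm _ (integrable_integrand x)]
  have h1 : ∫ t, ∫ θ, ph x (θ, t) * (1 - cos t) / (2 - cos θ - cos t) ∂circ ∂circ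
      = ∫ t, 2 * π * (cos (x.2 * |t|) * dens |(x.1 : ℝ)| |t|) ∂circ := by
    refine integral_congr_ae ?_
    have h0 : ∀ᵐ t ∂circ, t ≠ 0 := ae_restrict_of_ae (Measure.ae_ne volume 0)
    have h1 : ∀ᵐ t ∂circ, t ∈ Ioc (-π) π := ae_restrict_mem measurableSet_Ioc
    filter_upwards [h0, h1] with t ht0 ht1
    exact inner_integral x (abs_pos.2 ht0) (abs_le.2 ⟨ht1.1.le, ht1.2⟩)
  have h2 : ∫ t, cos (x.2 * |t|) * dens |(x.1 : ℝ)| |t| ∂circ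
      = ∫ t : ℝ, cos (x.2 * |t|) * dens |(x.1 : ℝ)| |t| := by
    rw [circ, Measure.restrict_congr_set Ioc_ae_eq_Icc]
    refine setIntegral_eq_integral_of_forall_compl_eq_zero fun t ht => ?_
    rw [dens, if_neg, mul_zero]
    exact fun h => ht (abs_le.1 h)
  have h3 := integral_comp_abs (f := fun t => cos (x.2 * t) * dens |(x.1 : ℝ)| t)
  rw [h1, integral_const_mul, h2, h3]
  field_simp
  ring

/-! ### Asymptotics of the one-dimensional integral -/

lemma div_sqrt_le_arsinh {y : ℝ} (hy : 0 ≤ y) : y / √(1 + y ^ 2) ≤ arsinh y := by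
  have hm : MonotoneOn (fun z => z * cosh z - sinh z) (Ici 0) := by
    refine monotoneOn_of_deriv_nonneg (convex_Ici 0) (by fun_prop) (by fun_prop) fun z hz => ?_
    rw [interior_Ici] at hz
    have hd : HasDerivAt (fun z => z * cosh z - sinh z) (1 * cosh z + z * sinh z - cosh z) z :=
      ((hasDerivAt_id z).mul (hasDerivAt_cosh z)).sub (hasDerivAt_sinh z)
    rw [hd.deriv]
    have := mul_nonneg (le_of_lt hz) (sinh_nonneg_iff.2 (le_of_lt hz))
    linarith
  have hz := arsinh_nonneg_iff.2 hy
  have := hm (mem_Ici.2 le_rfl) (mem_Ici.2 hz) hz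
  simp only [zero_mul, sinh_zero, sub_zero, sinh_arsinh, cosh_arsinh] at this
  rw [div_le_iff₀ (by positivity)]
  linarith

lemma arsinh_le_self {y : ℝ} (hy : 0 ≤ y) : arsinh y ≤ y := by
  rw [← arsinh_sinh y, arsinh_le_arsinh, arsinh_sinh]
  exact self_le_sinh_iff.2 hy

lemma sub_cube_le_wgt {t : ℝ} (h0 : 0 ≤ t) (hpi : t ≤ π) : t / 2 - t ^ 3 / 8 ≤ wgt t := by
  have hσ0 : 0 ≤ sin (t / 2) := sin_nonneg_of_nonneg_of_le_pi (by linarith) (by linarith)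
  have hσ1 : sin (t / 2) ≤ t / 2 := sin_le (by linarith)
  have hσ2 := sin_ge_sub_cube (x := t / 2) (by linarith)
  unfold wgt
  generalize sin (t / 2) = σ at *
  have h1 : σ - σ ^ 3 / 2 ≤ σ / √(1 + σ ^ 2) := by
    rw [le_div_iff₀ (by positivity)]
    have hq : √(1 + σ ^ 2) ≤ 1 + σ ^ 2 / 2 := by
      rw [sqrt_le_left (by positivity)]
      nlinarith [sq_nonneg (σ ^ 2)]
    by_cases h : σ - σ ^ 3 / 2 ≤ 0
    · exact (mul_nonpos_of_nonpos_of_nonneg h (by positivity)).trans hσ0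
    · refine (mul_le_mul_of_nonneg_left hq (le_of_not_ge h)).trans ?_
      nlinarith [pow_nonneg hσ0 5]
  have h2 : σ ^ 3 ≤ (t / 2) ^ 3 := pow_le_pow_left₀ hσ0 hσ1 3
  have h3 := pow_nonneg h0 3
  nlinarith

lemma wgt_le_decay {t : ℝ} (h0 : 0 ≤ t) (hpi : t ≤ π) : wgt t ≤ decay t / 2 := by
  have hσ0 : 0 ≤ sin (t / 2) := sin_nonneg_of_nonneg_of_le_pi (by linarith) (by linarith)
  have := div_sqrt_le_arsinh hσ0
  unfold wgt decay
  linarith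

lemma decay_le {t : ℝ} (h0 : 0 ≤ t) (hpi : t ≤ π) : decay t ≤ t := by
  have hσ0 : 0 ≤ sin (t / 2) := sin_nonneg_of_nonneg_of_le_pi (by linarith) (by linarith)
  have := arsinh_le_self hσ0
  have := sin_le (x := t / 2) (by linarith)
  unfold decay
  linarith

lemma quarter_le_decay {t : ℝ} (h0 : 0 ≤ t) (hpi : t ≤ π) : t / 4 ≤ decay t := by
  have hσ0 : 0 ≤ sin (t / 2) := sin_nonneg_of_nonneg_of_le_pi (by linarith) (by linarith)
  have h1 := div_sqrt_le_arsinh hσ0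
  have h2 := mul_le_sin (x := t / 2) (by linarith) (by linarith)
  have h3 : t / 4 ≤ 2 / π * (t / 2) := by
    have : (1 : ℝ) / 4 ≤ 1 / π := one_div_le_one_div_of_le pi_pos pi_le_four
    calc t / 4 = t * (1 / 4) := by ring
      _ ≤ t * (1 / π) := by gcongr
      _ = _ := by ring
  have h4 : √(1 + sin (t / 2) ^ 2) ≤ 2 := by
    rw [sqrt_le_left (by norm_num)]
    nlinarith [sin_sq_le_one (t / 2)]
  have h5 : sin (t / 2) / 2 ≤ sin (t / 2) / √(1 + sin (t / 2) ^ 2) := by gcongr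
  unfold decay
  linarith

/-- Replacing amplitude and decay rate by their leading terms `t/2` and `t`. For `t > π`, where
`dens` vanishes, the error is the tail of the leading term itself. -/
lemma abs_dens_sub_le {N t : ℝ} (hN : 0 < N) (ht : 0 < t) :
    |dens N t - t / 2 * exp (-(N * t))| ≤ (t ^ 3 + N * t ^ 4) * exp (-(N / 4 * t)) := by
  unfold dens
  split_ifs with hpi
  · have a1 := sub_cube_le_wgt ht.le hpi
    have a2 := wgt_le_decay ht.le hpi
    have a3 := decay_le ht.le hpi
    have a4 := quarter_le_decay ht.le hpi
    set E := exp (-(N * decay t)) with hE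
    have hEpos : 0 < E := exp_pos _
    have hE4 : E ≤ exp (-(N / 4 * t)) := exp_le_exp.2 (by nlinarith)
    have hee : exp (-(N * t)) ≤ E := exp_le_exp.2 (by nlinarith)
    have hee2 : E - exp (-(N * t)) ≤ N * (t ^ 3 / 4) * E := by
      have : exp (-(N * t)) = E * exp (-(N * (t - decay t))) := by
        rw [hE, ← exp_add]; ring_nf
      have h2 := add_one_le_exp (-(N * (t - decay t)))
      have h3 : N * (t - decay t) ≤ N * (t ^ 3 / 4) := by gcongr; linarith
      rw [this]
      nlinarith
    have hpos := pow_pos ht 3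
    have h : |wgt t * E - t / 2 * exp (-(N * t))| ≤ (t ^ 3 + N * t ^ 4) * E := by
      rw [abs_le]
      have hm := mul_le_mul_of_nonneg_left hee2 ht.le
      have hm2 := mul_le_mul_of_nonneg_left hee ht.le
      have hm3 : (wgt t - t / 2) * E ≤ 0 := mul_nonpos_of_nonpos_of_nonneg (by linarith) hEpos.le
      have hm4 : 0 ≤ (wgt t - t / 2 + t ^ 3 / 8) * E := mul_nonneg (by linarith) hEpos.le
      have hm5 : 0 < t ^ 3 * E := mul_pos hpos hEpos
      have hm6 : 0 < N * t ^ 4 * E := by positivity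
      constructor <;> nlinarith
    exact h.trans (mul_le_mul_of_nonneg_left hE4 (by positivity))
  · have h1 : 1 < t := by linarith [pi_gt_three]
    have h2 : exp (-(N * t)) ≤ exp (-(N / 4 * t)) := exp_le_exp.2 (by nlinarith)
    rw [zero_sub, abs_neg, abs_of_pos (by positivity)]
    refine mul_le_mul ?_ h2 (exp_pos _).le (by positivity)
    have : t ≤ t ^ 3 := le_self_pow₀ h1.le (by norm_num)
    have : 0 < N * t ^ 4 := by positivity
    linarith

lemma integral_pow_exp (k : ℕ) {r : ℝ} (hr : 0 < r) :
    ∫ t in Ioi (0 : ℝ), t ^ k * exp (-(r * t)) = k.factorial / r ^ (k + 1) := by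
  have h := integral_rpow_mul_exp_neg_mul_Ioi (a := k + 1) (by positivity) hr
  rw [Gamma_nat_eq_factorial, add_sub_cancel_right] at h
  simp only [rpow_natCast] at h
  rw [h, ← Nat.cast_succ, rpow_natCast]
  simp [div_eq_mul_inv, mul_comm]

lemma integrable_pow_exp (k : ℕ) {r : ℝ} (hr : 0 < r) :
    Integrable (fun t => t ^ k * exp (-(r * t))) (volume.restrict (Ioi (0 : ℝ))) := by
  -- a function with nonzero Bochner integral is integrable
  by_contra h
  have h1 := integral_undef h
  rw [integral_pow_exp k hr] at h1
  have : 0 < (k.factorial : ℝ) / r ^ (k + 1) := by positivity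
  linarith

lemma integrable_main {N : ℝ} (hN : 0 < N) (b : ℝ) :
    Integrable (fun t => cos (b * t) * (t * exp (-(N * t)))) (volume.restrict (Ioi (0 : ℝ))) := by
  have := integrable_pow_exp 1 hN
  simp only [pow_one] at this
  exact this.bdd_mul (c := 1) (by fun_prop) (Filter.Eventually.of_forall fun t => abs_cos_le_one _)

lemma integral_main {N : ℝ} (hN : 0 < N) (b : ℝ) :
    ∫ t in Ioi (0 : ℝ), cos (b * t) * (t * exp (-(N * t)))
      = (N ^ 2 - b ^ 2) / (N ^ 2 + b ^ 2) ^ 2 := by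
  set q := N ^ 2 + b ^ 2 with hq
  have hqpos : 0 < q := by positivity
  -- minus the real part of `(t/z + 1/z²) e^{-zt}` with `z = N + ib`
  set F : ℝ → ℝ := fun t => -(exp (-(N * t)) * (t * (N * cos (b * t) - b * sin (b * t)) / q
    + ((N ^ 2 - b ^ 2) * cos (b * t) - 2 * N * b * sin (b * t)) / q ^ 2)) with hF
  have hderiv (t : ℝ) : HasDerivAt F (cos (b * t) * (t * exp (-(N * t)))) t := by
    have hid : HasDerivAt (fun t : ℝ => b * t) b t := by
      simpa using (hasDerivAt_id t).const_mul b
    have hc := hid.cos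
    have hs := hid.sin
    have he : HasDerivAt (fun t : ℝ => exp (-(N * t))) (exp (-(N * t)) * (-N)) t := by
      have : HasDerivAt (fun t : ℝ => -(N * t)) (-N) t := by
        simpa using ((hasDerivAt_id t).const_mul N).fun_neg
      exact this.exp
    have h := (he.mul (((hasDerivAt_id t).mul ((hc.const_mul N).sub (hs.const_mul b))
      |>.div_const q).add (((hc.const_mul (N ^ 2 - b ^ 2)).sub
      (hs.const_mul (2 * N * b))).div_const (q ^ 2)))).neg
    refine h.congr_deriv ?_
    simp only [id, Pi.add_apply, Pi.mul_apply, Pi.sub_apply]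
    field_simp
    rw [hq]
    ring
  have hlim : Filter.Tendsto F Filter.atTop (𝓝 0) := by
    have e1 : Filter.Tendsto (fun t => t * exp (-(N * t))) Filter.atTop (𝓝 0) := by
      have := tendsto_rpow_mul_exp_neg_mul_atTop_nhds_zero 1 N hN
      simpa using this
    have e0 : Filter.Tendsto (fun t => exp (-(N * t))) Filter.atTop (𝓝 0) := by
      have := tendsto_rpow_mul_exp_neg_mul_atTop_nhds_zero 0 N hN
      simpa using this
    have e : Filter.Tendsto (fun t => (t * exp (-(N * t))) * ((N + |b|) / q)
        + exp (-(N * t)) * ((|N ^ 2 - b ^ 2| + |2 * N * b|) / q ^ 2)) Filter.atTop (𝓝 0) := by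
      simpa using (e1.mul_const _).add (e0.mul_const _)
    refine squeeze_zero_norm' ?_ e
    filter_upwards [Filter.eventually_ge_atTop 0] with t ht
    have h1 : |N * cos (b * t) - b * sin (b * t)| ≤ N + |b| := by
      refine (abs_sub _ _).trans (add_le_add ?_ ?_) <;> rw [abs_mul]
      · rw [abs_of_pos hN]
        exact mul_le_of_le_one_right hN.le (abs_cos_le_one _)
      · exact mul_le_of_le_one_right (abs_nonneg _) (abs_sin_le_one _)
    have h2 : |(N ^ 2 - b ^ 2) * cos (b * t) - 2 * N * b * sin (b * t)|
        ≤ |N ^ 2 - b ^ 2| + |2 * N * b| := by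
      refine (abs_sub _ _).trans (add_le_add ?_ ?_) <;> rw [abs_mul]
      · exact mul_le_of_le_one_right (abs_nonneg _) (abs_cos_le_one _)
      · exact mul_le_of_le_one_right (abs_nonneg _) (abs_sin_le_one _)
    rw [hF, norm_neg, norm_mul, norm_eq_abs, norm_eq_abs, abs_of_pos (exp_pos _)]
    rw [mul_comm t (exp _), mul_assoc (exp _), ← mul_add]
    refine mul_le_mul_of_nonneg_left ((abs_add_le _ _).trans (add_le_add ?_ ?_)) (exp_pos _).le
    · rw [abs_div, abs_mul, abs_of_nonneg ht, abs_of_pos hqpos, mul_div_assoc]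
      gcongr
    · rw [abs_div, abs_of_pos (pow_pos hqpos 2)]
      gcongr
  rw [integral_Ioi_of_hasDerivAt_of_tendsto' (fun t _ => hderiv t) (integrable_main hN b) hlim]
  simp [hF]

lemma measurable_dens (N : ℝ) : Measurable (dens N) := by
  have hd : Measurable decay := by
    unfold decay
    exact (continuous_arsinh.comp (by fun_prop)).measurable.const_mul _
  have hw : Measurable wgt := by unfold wgt; fun_prop
  unfold dens
  exact Measurable.ite measurableSet_Iic (hw.mul ((hd.const_mul N).neg.exp)) measurable_const

lemma line_estimate {N : ℝ} (hN : 0 < N) (b : ℝ) :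
    |(∫ t in Ioi 0, cos (b * t) * dens N t) - (N ^ 2 - b ^ 2) / (2 * (N ^ 2 + b ^ 2) ^ 2)|
      ≤ 26112 / N ^ 4 := by
  have hB3 := integrable_pow_exp 3 (r := N / 4) (by positivity)
  have hB4 := integrable_pow_exp 4 (r := N / 4) (by positivity)
  have hB : Integrable (fun t => (t ^ 3 + N * t ^ 4) * exp (-(N / 4 * t)))
      (volume.restrict (Ioi (0 : ℝ))) := by
    refine (hB3.add (hB4.const_mul N)).congr (Filter.Eventually.of_forall fun t => ?_)
    simp only [Pi.add_apply]
    ring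
  have hBval : ∫ t in Ioi 0, (t ^ 3 + N * t ^ 4) * exp (-(N / 4 * t)) = 26112 / N ^ 4 := by
    have e (t : ℝ) : (t ^ 3 + N * t ^ 4) * exp (-(N / 4 * t))
        = t ^ 3 * exp (-(N / 4 * t)) + N * (t ^ 4 * exp (-(N / 4 * t))) := by ring
    simp only [e]
    rw [integral_add hB3 (hB4.const_mul N), integral_const_mul,
      integral_pow_exp 3 (by positivity), integral_pow_exp 4 (by positivity)]
    simp only [Nat.factorial]
    field_simp
    ring
  have hbound : ∀ᵐ t ∂volume.restrict (Ioi (0 : ℝ)),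
      ‖cos (b * t) * dens N t - cos (b * t) * (t * exp (-(N * t))) / 2‖
        ≤ (t ^ 3 + N * t ^ 4) * exp (-(N / 4 * t)) := by
    filter_upwards [ae_restrict_mem measurableSet_Ioi] with t ht
    rw [show cos (b * t) * dens N t - cos (b * t) * (t * exp (-(N * t))) / 2
      = cos (b * t) * (dens N t - t / 2 * exp (-(N * t))) by ring, norm_mul]
    exact (mul_le_of_le_one_left (norm_nonneg _) (abs_cos_le_one _)).trans (abs_dens_sub_le hN ht)
  have hmain := (integrable_main hN b).div_const 2
  have hdiff : Integrable
      (fun t => cos (b * t) * dens N t - cos (b * t) * (t * exp (-(N * t))) / 2)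
      (volume.restrict (Ioi (0 : ℝ))) := by
    refine hB.mono' (Measurable.aestronglyMeasurable ?_) hbound
    have := measurable_dens N
    fun_prop
  have hdens : Integrable (fun t => cos (b * t) * dens N t) (volume.restrict (Ioi (0 : ℝ))) := by
    refine (hdiff.add hmain).congr (Filter.Eventually.of_forall fun t => ?_)
    simp
  have hval : ∫ t in Ioi 0, cos (b * t) * (t * exp (-(N * t))) / 2
      = (N ^ 2 - b ^ 2) / (2 * (N ^ 2 + b ^ 2) ^ 2) := by
    rw [integral_div, integral_main hN, div_div, mul_comm 2]
  rw [← hval, ← integral_sub hdens hmain, ← hBval]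
  exact norm_integral_le_of_norm_le hB hbound

lemma leading_term (x : Z2) (hx : x ≠ (0, 0)) :
    cos (2 * argZ x) / (2 * π * norm2 x ^ 2)
      = ((x.1 : ℝ) ^ 2 - (x.2 : ℝ) ^ 2) / (2 * π * ((x.1 : ℝ) ^ 2 + (x.2 : ℝ) ^ 2) ^ 2) := by
  have hq : 0 < (x.1 : ℝ) ^ 2 + (x.2 : ℝ) ^ 2 := by
    obtain ⟨a, b⟩ := x
    by_contra! h
    apply hx
    have ha : (a : ℝ) = 0 := by nlinarith [sq_nonneg (a : ℝ), sq_nonneg (b : ℝ)]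
    have hb : (b : ℝ) = 0 := by nlinarith [sq_nonneg (a : ℝ), sq_nonneg (b : ℝ)]
    simpa using And.intro ha hb
  set z : ℂ := (x.1 : ℂ) + (x.2 : ℂ) * Complex.I with hz
  have hre : z.re = x.1 := by simp [hz]
  have him : z.im = x.2 := by simp [hz]
  have hnsq : ‖z‖ ^ 2 = (x.1 : ℝ) ^ 2 + (x.2 : ℝ) ^ 2 := by
    rw [Complex.sq_norm, Complex.normSq_apply, hre, him]; ring
  have hz0 : z ≠ 0 := by
    rintro h
    rw [h] at hnsq
    simp at hnsq
    linarith
  rw [argZ, ← hz, cos_two_mul, Complex.cos_arg hz0, div_pow, hnsq, hre, norm2, sq_sqrt hq.le]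
  field_simp
  ring

lemma fH_estimate_of_le (x : Z2) (hx : x ≠ (0, 0)) (hle : |x.2| ≤ |x.1|) :
    |fH x - ((x.1 : ℝ) ^ 2 - (x.2 : ℝ) ^ 2) / (2 * π * ((x.1 : ℝ) ^ 2 + (x.2 : ℝ) ^ 2) ^ 2)|
      ≤ 104448 / ((x.1 : ℝ) ^ 2 + (x.2 : ℝ) ^ 2) ^ 2 := by
  obtain ⟨a, b⟩ := x
  simp only at hle ⊢
  have ha : a ≠ 0 := by
    rintro rfl
    apply hx
    simp at hle
    simp [hle]
  have hN : 0 < |(a : ℝ)| := abs_pos.2 (by exact_mod_cast ha)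
  have h := line_estimate hN b
  have hle' : |(b : ℝ)| ≤ |(a : ℝ)| := by exact_mod_cast hle
  have hsq : (b : ℝ) ^ 2 ≤ (a : ℝ) ^ 2 := sq_le_sq.2 hle'
  have ha2 : 0 < (a : ℝ) ^ 2 := by positivity
  rw [fH_eq_line]
  simp only
  have h4 : |(a : ℝ)| ^ 4 = ((a : ℝ) ^ 2) ^ 2 := by
    rw [show 4 = 2 * 2 from rfl, pow_mul, sq_abs]
  rw [sq_abs, h4] at h
  set I := ∫ t in Ioi 0, cos (b * t) * dens |(a : ℝ)| t
  have e : 1 / π * I - ((a : ℝ) ^ 2 - (b : ℝ) ^ 2) / (2 * π * ((a : ℝ) ^ 2 + (b : ℝ) ^ 2) ^ 2)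
      = 1 / π * (I - ((a : ℝ) ^ 2 - (b : ℝ) ^ 2) / (2 * ((a : ℝ) ^ 2 + (b : ℝ) ^ 2) ^ 2)) := by
    field_simp
  have hpi : 1 / π ≤ 1 := by
    rw [div_le_one pi_pos]; linarith [pi_gt_three]
  rw [e, abs_mul, abs_of_pos (by positivity)]
  refine (mul_le_of_le_one_left (abs_nonneg _) hpi).trans (h.trans ?_)
  rw [div_le_div_iff₀ (by positivity) (by positivity)]
  nlinarith [sq_nonneg (b : ℝ)]

/-- The restriction `|x₂| ≤ |x₁|` is removed by exchanging the coordinates, which changes the sign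
of both `f_H` and the leading term. -/
lemma fH_estimate (x : Z2) (hx : x ≠ (0, 0)) :
    |fH x - ((x.1 : ℝ) ^ 2 - (x.2 : ℝ) ^ 2) / (2 * π * ((x.1 : ℝ) ^ 2 + (x.2 : ℝ) ^ 2) ^ 2)|
      ≤ 104448 / ((x.1 : ℝ) ^ 2 + (x.2 : ℝ) ^ 2) ^ 2 := by
  rcases le_total |x.2| |x.1| with h | h
  · exact fH_estimate_of_le x hx h
  · have hx' : x.swap ≠ (0, 0) := fun h => hx (by simpa using congrArg Prod.swap h)
    have hs := fH_estimate_of_le x.swap hx' h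
    rw [← fV_eq_swap, fV_eq_neg x hx, Prod.fst_swap, Prod.snd_swap, ← abs_neg,
      add_comm ((x.2 : ℝ) ^ 2)] at hs
    convert hs using 2
    ring

end HV

/-- **Lemma (asymptotics of the weight functions).**
There is a constant `C > 0` such that for every nonzero `x ∈ ℤ²`,
`|f_H(x) − cos(2 arg x)/(2π|x|²)| ≤ C|x|⁻⁴` and
`|f_V(x) + cos(2 arg x)/(2π|x|²)| ≤ C|x|⁻⁴`. -/
theorem weight_function_asymptotics :
    ∃ C : ℝ, 0 < C ∧ ∀ x : HV.Z2, x ≠ (0, 0) →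
      |HV.fH x - Real.cos (2 * HV.argZ x) / (2 * Real.pi * HV.norm2 x ^ 2)| ≤
          C / HV.norm2 x ^ 4 ∧
        |HV.fV x + Real.cos (2 * HV.argZ x) / (2 * Real.pi * HV.norm2 x ^ 2)| ≤
          C / HV.norm2 x ^ 4 := by
  refine ⟨104448, by norm_num, fun x hx => ?_⟩
  have h4 : HV.norm2 x ^ 4 = ((x.1 : ℝ) ^ 2 + (x.2 : ℝ) ^ 2) ^ 2 := by
    rw [show 4 = 2 * 2 from rfl, pow_mul, HV.norm2, Real.sq_sqrt (by positivity)]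
  have h := HV.fH_estimate x hx
  rw [← HV.leading_term x hx, ← h4] at h
  refine ⟨h, ?_⟩
  rw [HV.fV_eq_neg x hx, neg_add_eq_sub, abs_sub_comm]
  exact h
end
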